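/- arXiv:math/0302037 — 2 statements merged into one kernel-verified Lean document; each statement's English description precedes it below -/
import Mathlib

section
/- For all x, y ∈ W_n: B_n(x) = B_n(y) if and only if x ↔_L y. -/
open scoped Classical

noncomputable section

/-! ## The hyperoctahedral group `W_n` as signed permutations of `I_n ⊆ ℤ` -/

abbrev P := Equiv.Perm ℤ

/-- `W_n` : permutations of `I_n = {±1, …, ±n}` commuting with `i ↦ -i`,
realized as permutations of `ℤ` fixing everything outside `I_n`. -/
def Wset (n : ℕ) : Set P :=
  {π | (∀ i : ℤ, π (-i) = - π i) ∧ ∀ i : ℤ, (n : ℤ) < |i| → π i = i}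

/-- the generator `t = (1, -1)` -/
def tgen : P := Equiv.swap 1 (-1)

/-- the generator `s_i = (i, i+1)(-i, -(i+1))` -/
def sgen (i : ℕ) : P :=
  Equiv.swap (i : ℤ) ((i : ℤ) + 1) * Equiv.swap (-(i : ℤ)) (-((i : ℤ) + 1))

/-- the generating set `S_n = {t, s_1, …, s_{n-1}}` -/
def Sset (n : ℕ) : Set P := insert tgen (sgen '' Set.Icc 1 (n - 1))

/-- the length function of `W_n` with respect to `S_n` -/
def len (n : ℕ) (w : P) : ℕ :=
  sInf {k | ∃ l : List P, (∀ g ∈ l, g ∈ Sset n) ∧ l.prod = w ∧ l.length = k}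

/-- number of occurrences of `tgen` in a list -/
def tcount (l : List P) : ℕ := (l.map (fun g => if g = tgen then 1 else 0)).sum

/-- `ℓ_t(w)` : the number of occurrences of `t` in a (any) reduced expression of `w` -/
def tlen (n : ℕ) (w : P) : ℕ :=
  sInf {k | ∃ l : List P, (∀ g ∈ l, g ∈ Sset n) ∧ l.prod = w ∧
    l.length = len n w ∧ tcount l = k}

/-- the Bruhat order on `W_n` : `x ≤ y` iff some reduced expression of `y`
has a subword whose product is `x`. -/
def bruhat (n : ℕ) (x y : P) : Prop :=
  ∃ l l' : List P, (∀ g ∈ l, g ∈ Sset n) ∧ l.prod = y ∧ l.length = len n y ∧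
    List.Sublist l' l ∧ l'.prod = x

/-! ## Generalized Robinson–Schensted correspondence -/

abbrev Tab := List (List ℕ)

/-- row insertion of `x` into one row; returns the new row and the bumped entry (if any) -/
def insRow (x : ℕ) : List ℕ → List ℕ × Option ℕ
  | [] => ([x], none)
  | y :: ys =>
    if x < y then (x :: ys, some y)
    else
      let p := insRow x ys
      (y :: p.1, p.2)

/-- Schensted insertion of `x` into a tableau; returns the new tableau
and the (row, column) coordinates of the newly created box. -/
def insTab (x : ℕ) : Tab → Tab × ℕ × ℕ
  | [] => ([[x]], 0, 0)
  | row :: rest =>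
    let p := insRow x row
    match p.2 with
    | none => (p.1 :: rest, 0, row.length)
    | some b =>
      let q := insTab b rest
      (p.1 :: q.1, q.2.1 + 1, q.2.2)

/-- place the label `lbl` at the end of row `pos.1` of the recording tableau -/
def place (lbl : ℕ) (pos : ℕ × ℕ) (T : Tab) : Tab :=
  if pos.1 < T.length then T.set pos.1 ((T.getD pos.1 []) ++ [lbl]) else T ++ [[lbl]]

/-- one step of the generalized RS algorithm: insert `|π(i)|` into `A⁺` or `A⁻`
according to the sign of `π(i)`, and record `i` in the corresponding `B`-tableau. -/
def RSstep (π : P) (st : (Tab × Tab) × (Tab × Tab)) (i : ℕ) : (Tab × Tab) × (Tab × Tab) :=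
  let v := (π (i : ℤ)).natAbs
  if 0 < π (i : ℤ) then
    let p := insTab v st.1.1
    ((p.1, st.1.2), (place i p.2 st.2.1, st.2.2))
  else
    let p := insTab v st.1.2
    ((st.1.1, p.1), (st.2.1, place i p.2 st.2.2))

def RSfull (n : ℕ) (π : P) : (Tab × Tab) × (Tab × Tab) :=
  (((List.range n).map (· + 1)).foldl (RSstep π)) ((([], []), ([], [])))

/-- the insertion bitableau `A_n(π) = (A⁺, A⁻)` -/
def Atab (n : ℕ) (π : P) : Tab × Tab := (RSfull n π).1

/-- the recording bitableau `B_n(π) = (B⁺, B⁻)` -/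
def Btab (n : ℕ) (π : P) : Tab × Tab := (RSfull n π).2

/-- `T` is a standard Young tableau -/
def IsStdTab (T : Tab) : Prop :=
  (∀ row ∈ T, row ≠ [] ∧ row.Chain' (· < ·)) ∧
  T.Chain' (fun r1 r2 => r2.length ≤ r1.length) ∧
  ∀ i j : ℕ, i + 1 < T.length → j < (T.getD (i + 1) []).length →
    (T.getD i []).getD j 0 < (T.getD (i + 1) []).getD j 0

/-- `(T₁, T₂)` is an `n`-standard bitableau: both standard, entry sets disjoint
with union `{1, …, n}` -/
def IsNStdBitab (n : ℕ) (p : Tab × Tab) : Prop :=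
  IsStdTab p.1 ∧ IsStdTab p.2 ∧ (p.1.flatten ++ p.2.flatten).Perm (List.range' 1 n)

/-- the shape of a bitableau -/
def shape2 (p : Tab × Tab) : List ℕ × List ℕ := (p.1.map List.length, p.2.map List.length)

/-! ## Knuth relations -/

/-- `t_i = (i, -i)` -/
def ttgen (i : ℕ) : P := Equiv.swap (i : ℤ) (-(i : ℤ))

/-- `S'_n = S_n ∪ {t_1, …, t_n}` -/
def Sprime (n : ℕ) : Set P := Sset n ∪ (ttgen '' Set.Icc 1 n)

/-- the extended left descent set `L'(w)` -/
def Ldesc (n : ℕ) (w : P) : Set P := {u ∈ Sprime n | len n (u * w) < len n w}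

/-- the elementary relation `x —s→ y` -/
def knuthStep (n : ℕ) (x y : P) : Prop :=
  ∃ i ∈ Set.Icc 1 (n - 1), y = sgen i * x ∧ len n x < len n y ∧
    ¬ (Ldesc n x ⊆ Ldesc n y)

/-- the relation `x ↔_L y` -/
def knuthRel (n : ℕ) : P → P → Prop :=
  Relation.ReflTransGen (fun a b => knuthStep n a b ∨ knuthStep n b a)

/-! ## Parabolic subgroups, coset representatives and the decomposition -/

/-- the parabolic subgroup `𝔖_n = ⟨s_1, …, s_{n-1}⟩` -/
def SymN (n : ℕ) : Subgroup P := Subgroup.closure (sgen '' Set.Icc 1 (n - 1))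

/-- the parabolic subgroup `𝔖_{l, n-l} = ⟨{s_1, …, s_{n-1}} \ {s_l}⟩` -/
def SymLR (n l : ℕ) : Subgroup P :=
  Subgroup.closure (sgen '' {i | 1 ≤ i ∧ i ≤ n - 1 ∧ i ≠ l})

/-- `Y_{l, n-l}` : minimal length representatives of left cosets of `𝔖_{l,n-l}` in `𝔖_n` -/
def Yset (n l : ℕ) : Set P :=
  {w | w ∈ SymN n ∧ ∀ u ∈ SymLR n l, len n w ≤ len n (w * u)}

/-- `X_n` : minimal length representatives of the left cosets `w 𝔖_n` in `W_n` -/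
def Xset (n : ℕ) : Set P :=
  {w | w ∈ Wset n ∧ ∀ u ∈ SymN n, len n w ≤ len n (w * u)}

/-- `X_n^{(l)}` -/
def Xl (n l : ℕ) : Set P := {w ∈ Xset n | tlen n w = l}

/-- `r_1 = t`, `r_{i+1} = s_i r_i` -/
def rgen : ℕ → P
  | 0 => 1
  | 1 => tgen
  | (i + 2) => sgen (i + 1) * rgen (i + 1)

/-- `a_l = r_1 r_2 ⋯ r_l` -/
def al (l : ℕ) : P := ((List.range l).map (fun k => rgen (k + 1))).prod

/-- the set `X_n^{(l)} ⬝ 𝔖_{l, n-l}` -/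
def XSset (n l : ℕ) : Set P := Set.image2 (· * ·) (Xl n l) (SymLR n l : Set P)

/-- `w = a ⬝ a_l ⬝ σ ⬝ b⁻¹` is the canonical decomposition of `w`
(with `a, b ∈ Y_{l,n-l}`, `σ ∈ 𝔖_{l,n-l}` and additivity of lengths) -/
def IsDecomp (n l : ℕ) (w a σ b : P) : Prop :=
  a ∈ Yset n l ∧ b ∈ Yset n l ∧ σ ∈ SymLR n l ∧ w = a * al l * σ * b⁻¹ ∧
    len n w = len n a + len n (al l) + len n σ + len n b

/-- the relation `w ⇝_L w'` -/
def squig (n : ℕ) (w w' : P) : Prop :=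
  ∃ l a σ b a' σ', tlen n w = l ∧ tlen n w' = l ∧
    IsDecomp n l w a σ b ∧ IsDecomp n l w' a' σ' b ∧ knuthRel n σ σ'

/-! ## The two-parameter Iwahori–Hecke algebra and Kazhdan–Lusztig data -/

/-- the ring `A = ℤ[V^{±1}, v^{±1}]`, as the group algebra of `Γ = ℤ × ℤ`
(a monomial `V^i v^j` corresponds to `(i,j) ∈ ℤ × ℤ`). -/
abbrev RR := AddMonoidAlgebra ℤ (ℤ × ℤ)

/-- the monomial with exponent `g` -/
def mono (g : ℤ × ℤ) : RR := AddMonoidAlgebra.single g 1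

/-- `Γ₋` for the lexicographic order with `V ≫ v`: `V^i v^j < 1` -/
def Gneg (g : ℤ × ℤ) : Prop := g.1 < 0 ∨ (g.1 = 0 ∧ g.2 < 0)

/-- an element of `ℤ[Γ₋]` : all monomials lie in `Γ₋` -/
def inNeg (f : RR) : Prop := ∀ g ∈ f.coeff.support, Gneg g

/-- the bar involution of `A`, `V ↦ V⁻¹`, `v ↦ v⁻¹` -/
def barR : RR → RR := fun f => .ofCoeff (Finsupp.equivMapDomain (Equiv.neg (ℤ × ℤ)) f.coeff)

/-- the parameter `v_s` of a generator (`v_t = V`, `v_{s_i} = v`) -/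
def vgen (g : P) : RR := if g = tgen then mono (1, 0) else mono (0, 1)

/-- the inverse `v_s⁻¹` of the parameter of a generator -/
def vgenInv (g : P) : RR := if g = tgen then mono (-1, 0) else mono (0, -1)

/-- the free `A`-module with basis indexed by permutations; the Hecke algebra
`H_n` is carried by the elements supported on `W_n`. -/
abbrev HH := P →₀ RR

/-- the standard basis element `T_w` -/
def TT (w : P) : HH := Finsupp.single w 1

/-- All the data attached to the Iwahori–Hecke algebra `H_n` of `W_n` over
`A = ℤ[V^{±1}, v^{±1}]`: the multiplication, the bar involution, the
Kazhdan–Lusztig basis `C_w = Σ_y P*_{y,w} T_y` (for the order on `Γ` given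
by `Γ₊ = {V^i v^j : i > 0} ∪ {v^j : j > 0}`), and Lusztig's `M`-polynomials,
together with their defining properties. -/
structure KLData (n : ℕ) where
  mul : HH → HH → HH
  mul_add_left : ∀ a b c, mul (a + b) c = mul a c + mul b c
  mul_add_right : ∀ a b c, mul a (b + c) = mul a b + mul a c
  mul_smul_left : ∀ (r : RR) a b, mul (r • a) b = r • mul a b
  mul_smul_right : ∀ (r : RR) a b, mul a (r • b) = r • mul a b
  mul_assoc : ∀ a b c, mul (mul a b) c = mul a (mul b c)
  one_mul : ∀ a, mul (TT 1) a = a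
  mul_one : ∀ a, mul a (TT 1) = a
  /-- `T_w T_{w'} = T_{w w'}` when lengths add -/
  T_mul : ∀ w w', w ∈ Wset n → w' ∈ Wset n →
    len n (w * w') = len n w + len n w' → mul (TT w) (TT w') = TT (w * w')
  /-- the quadratic relations `T_s² = T_1 + (v_s - v_s⁻¹) T_s` -/
  T_sq : ∀ g ∈ Sset n, mul (TT g) (TT g) = TT 1 + (vgen g - vgenInv g) • TT g
  bar : HH → HH
  bar_add : ∀ a b, bar (a + b) = bar a + bar b
  bar_smul : ∀ (r : RR) a, bar (r • a) = barR r • bar a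
  bar_mul : ∀ a b, bar (mul a b) = mul (bar a) (bar b)
  /-- `bar T_s = T_s⁻¹ = T_s + (v_s⁻¹ - v_s) T_1` -/
  bar_gen : ∀ g ∈ Sset n, bar (TT g) = TT g + (vgenInv g - vgen g) • TT 1
  /-- the Kazhdan–Lusztig basis element `C_w`, whose coordinate at `T_y` is
  the polynomial `P*_{y,w}` -/
  C : P → HH
  /-- `P*_{w,w} = 1` -/
  C_self : ∀ w, C w w = 1
  /-- `P*_{y,w} = 0` unless `y ≤ w` -/
  C_supp : ∀ w y, C w y ≠ 0 → bruhat n y w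
  /-- `P*_{y,w} ∈ ℤ[Γ₋]` for `y < w` -/
  C_neg : ∀ w y, y ≠ w → inNeg (C w y)
  /-- `C_w` is bar-invariant -/
  C_bar : ∀ w, w ∈ Wset n → bar (C w) = C w
  /-- `M s w` is the finitely supported family `z ↦ M^s_{z,w}` -/
  M : P → P → (P →₀ RR)
  M_supp : ∀ s w z, (M s w) z ≠ 0 → bruhat n z w ∧ z ≠ w ∧ len n (s * z) < len n z
  /-- the symmetry condition `bar M^s_{y,w} = M^s_{y,w}` -/
  M_bar : ∀ s w z, barR ((M s w) z) = (M s w) z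
  /-- the condition `M^s_{y,w} + Σ_{y<z<w, sz<z} P*_{y,z} M^s_{z,w} - v_s P*_{y,w} ∈ ℤ[Γ₋]` -/
  M_cond : ∀ s ∈ Sset n, ∀ y w, len n (s * y) < len n y → len n w < len n (s * w) →
    bruhat n y w → y ≠ w →
    inNeg ((M s w) y + (M s w).sum (fun z m => if z = y then 0 else C z y * m)
      - vgen s * C w y)
  /-- `C_s C_w = C_{sw} + Σ_{z<w, sz<z} M^s_{z,w} C_z` when `sw > w` -/
  mulC_up : ∀ s ∈ Sset n, ∀ w ∈ Wset n, len n w < len n (s * w) →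
    mul (C s) (C w) = C (s * w) + (M s w).sum (fun z m => m • C z)
  /-- `C_s C_w = (v_s + v_s⁻¹) C_w` when `sw < w` -/
  mulC_down : ∀ s ∈ Sset n, ∀ w ∈ Wset n, len n (s * w) < len n w →
    mul (C s) (C w) = (vgen s + vgenInv s) • C w

/-- `P_{y,w} = v_y⁻¹ v_w P*_{y,w}` -/
def Ppoly (n : ℕ) (D : KLData n) (y w : P) : RR :=
  mono ((tlen n w : ℤ) - (tlen n y : ℤ),
        ((len n w : ℤ) - (tlen n w : ℤ)) - ((len n y : ℤ) - (tlen n y : ℤ))) * D.C w y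

/-- the `R`-polynomials : `bar T_w = Σ_y R_{y,w} T_y` -/
def Rpoly {n : ℕ} (D : KLData n) (y w : P) : RR := (D.bar (TT w)) y

/-- `y ≤_{L,s} w` : `C_y` occurs with non-zero coefficient in `C_s C_w`
(expressed in the `C`-basis), for some `s ∈ S_n`, `y ≠ w` -/
def leLelem {n : ℕ} (D : KLData n) (y w : P) : Prop :=
  ∃ s ∈ Sset n, len n w < len n (s * w) ∧ (y = s * w ∨ (D.M s w) y ≠ 0)

/-- the preorder `≤_L` -/
def leL {n : ℕ} (D : KLData n) : P → P → Prop := Relation.ReflTransGen (leLelem D)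

/-- the equivalence `∼_L`; its classes are the left cells -/
def simL {n : ℕ} (D : KLData n) (y w : P) : Prop := leL D y w ∧ leL D w y

/-- `f` is a polynomial in `q = v²` -/
def isPolyInQ (f : RR) : Prop := ∀ g ∈ f.coeff.support, g.1 = 0 ∧ 0 ≤ g.2 ∧ 2 ∣ g.2

end

/-!
Consider the one-line notation of `x⁻¹` as a word in the letters `±1, …, ±n`. Multiplying `x` by
`s_i` on the left exchanges the letters in positions `i` and `i + 1` and increases the length iff
these two letters are ascending; multiplying by `t_j` decreases the length iff the `j`-th letter is
negative. Comparing `L'(x)` with `L'(s_i x)`, one finds that the moves generating `↔_L` exchange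
adjacent letters which have opposite signs or have a neighbour whose value lies between them.
Hence the subwords of positive and of negative letters can be separated, and `↔_L` amounts to Knuth
equivalence of each of these two subwords. By Schützenberger's symmetry the two components of
`B_n(x)` are the insertion tableaux of the subwords of positive letters of `x⁻¹` and of `-x⁻¹`, and
Knuth's theorem says that two words are equivalent iff they have the same insertion tableau.
-/

/-! ### Row insertion -/

section RowInsertion

variable {x z a : ℕ} {A A' B R : List ℕ}

lemma insRow_append_of_forall_le (h : ∀ c ∈ A, c ≤ x) :
    insRow x (A ++ B) = (A ++ (insRow x B).1, (insRow x B).2) := by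
  induction A with
  | nil => rfl
  | cons c A ih =>
    rw [List.forall_mem_cons] at h
    simp only [List.cons_append, insRow, if_neg h.1.not_gt, ih h.2]

lemma insRow_append_of_bump (h : insRow x A = (A', some a)) :
    insRow x (A ++ B) = (A' ++ B, some a) := by
  induction A generalizing A' with
  | nil => simp [insRow] at h
  | cons c A ih =>
    by_cases hc : x < c
    · simp only [insRow, if_pos hc, Prod.mk.injEq] at h
      simp only [List.cons_append, insRow, if_pos hc, ← h.1, h.2]
    · simp only [insRow, if_neg hc, Prod.mk.injEq] at h
      obtain ⟨rfl, h⟩ := h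
      simp only [List.cons_append, insRow, if_neg hc, ih (Prod.ext rfl h)]

lemma insRow_of_forall_lt (h : ∀ c ∈ B, x < c) : insRow x B = (x :: B.tail, B.head?) := by
  cases B with
  | nil => rfl
  | cons c B => simp only [insRow, if_pos (h c List.mem_cons_self), List.tail_cons, List.head?_cons]

lemma insRow_append_of_le_of_lt (hA : ∀ c ∈ A, c ≤ x) (hB : ∀ c ∈ B, x < c) :
    insRow x (A ++ B) = (A ++ x :: B.tail, B.head?) := by
  rw [insRow_append_of_forall_le hA, insRow_of_forall_lt hB]

lemma insRow_of_forall_le (h : ∀ c ∈ R, c ≤ x) : insRow x R = (R ++ [x], none) := by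
  simpa [insRow] using insRow_append_of_forall_le (B := []) h

lemma insRow_perm (x : ℕ) (R : List ℕ) :
    ((insRow x R).1 ++ (insRow x R).2.toList).Perm (x :: R) := by
  induction R with
  | nil => rfl
  | cons c R ih =>
    by_cases hc : x < c
    · simp [insRow, hc]
    · simpa [insRow, hc] using (ih.cons c).trans (List.Perm.swap x c R)

lemma lt_of_insRow_eq_some (h : insRow x R = (A', some a)) : x < a := by
  induction R generalizing A' with
  | nil => simp [insRow] at h
  | cons c R ih =>
    by_cases hc : x < c
    · simp only [insRow, if_pos hc, Prod.mk.injEq, Option.some.injEq] at h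
      exact h.2 ▸ hc
    · simp only [insRow, if_neg hc, Prod.mk.injEq] at h
      exact ih (Prod.ext rfl h.2)

lemma exists_insRow_eq_some (h : ∃ c ∈ A, x < c) : ∃ A' a, insRow x A = (A', some a) := by
  cases hb : (insRow x A).2 with
  | some a => exact ⟨_, a, Prod.ext rfl hb⟩
  | none =>
    exfalso
    induction A with
    | nil => simp at h
    | cons c A ih =>
      by_cases hc : x < c
      · simp [insRow, hc] at hb
      · simp only [insRow, if_neg hc] at hb
        exact ih (by simpa [hc] using h) hb

lemma forall_le_or_exists_insRow_eq_some (x : ℕ) (R : List ℕ) :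
    (∀ c ∈ R, c ≤ x) ∨ ∃ R' a, insRow x R = (R', some a) := by
  by_cases h : ∃ c ∈ R, x < c
  · exact .inr (exists_insRow_eq_some h)
  · exact .inl fun c hc => not_lt.mp fun hxc => h ⟨c, hc, hxc⟩

lemma mem_of_insRow_eq_some (h : insRow x R = (A', some a)) : a ∈ R := by
  have hperm := insRow_perm x R
  rw [h] at hperm
  have : a ∈ x :: R := hperm.subset (by simp)
  exact (List.mem_cons.mp this).resolve_left (lt_of_insRow_eq_some h).ne'

lemma forall_mem_insRow {p : ℕ → Prop} (hx : p x) (hR : ∀ c ∈ R, p c) :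
    ∀ c ∈ (insRow x R).1, p c := fun c hc =>
  List.forall_mem_cons.mpr ⟨hx, hR⟩ c ((insRow_perm x R).subset (List.mem_append_left _ hc))

lemma exists_append_le_lt (hR : R.Pairwise (· ≤ ·)) (z : ℕ) :
    ∃ A B, R = A ++ B ∧ (∀ c ∈ A, c ≤ z) ∧ ∀ c ∈ B, z < c := by
  induction R with
  | nil => exact ⟨[], [], by simp⟩
  | cons c R ih =>
    obtain ⟨hc, hR⟩ := List.pairwise_cons.mp hR
    obtain ⟨A, B, rfl, hA, hB⟩ := ih hR
    by_cases hcz : c ≤ z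
    · exact ⟨c :: A, B, rfl, List.forall_mem_cons.mpr ⟨hcz, hA⟩, hB⟩
    · exact ⟨[], c :: (A ++ B), rfl, by simp,
        List.forall_mem_cons.mpr ⟨by lia, fun d hd => by have := hc d hd; lia⟩⟩

lemma insRow_sorted (hR : R.Pairwise (· ≤ ·)) (x : ℕ) : (insRow x R).1.Pairwise (· ≤ ·) := by
  obtain ⟨A, B, rfl, hA, hB⟩ := exists_append_le_lt hR x
  obtain ⟨hA', hB', hAB⟩ := List.pairwise_append.mp hR
  rw [insRow_append_of_le_of_lt hA hB]
  refine List.pairwise_append.mpr ⟨hA', List.pairwise_cons.mpr ⟨fun c hc => ?_, hB'.tail⟩, ?_⟩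
  · exact (hB c (List.mem_of_mem_tail hc)).le
  · rintro c hc d (_ | ⟨_, hd⟩)
    exacts [hA c hc, hAB c hc d (List.mem_of_mem_tail hd)]

/-- The bumped letter is the leftmost letter exceeding `x`, hence the least one. -/
lemma le_of_insRow_eq_some (hR : R.Pairwise (· ≤ ·)) (h : insRow x R = (A', some a)) :
    ∀ c ∈ A', x < c → a ≤ c := by
  obtain ⟨A, B, rfl, hA, hB⟩ := exists_append_le_lt hR x
  rw [insRow_append_of_le_of_lt hA hB, Prod.mk.injEq] at h
  obtain ⟨rfl, h⟩ := h
  obtain ⟨B, rfl⟩ := List.head?_eq_some_iff.mp h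
  intro c hc hxc
  rcases List.mem_append.mp hc with hc | _ | ⟨_, hc⟩
  · exact absurd hxc (hA c hc).not_gt
  · exact absurd hxc (lt_irrefl x)
  · exact List.rel_of_pairwise_cons (List.pairwise_append.mp hR).2.1 hc

/-- Insertion of a word into a single row: the resulting row, and the word of bumped letters
in the order in which they leave the row. -/
def rowWord : List ℕ → List ℕ → List ℕ × List ℕ
  | R, [] => (R, [])
  | R, x :: w =>
    ((rowWord (insRow x R).1 w).1, (insRow x R).2.toList ++ (rowWord (insRow x R).1 w).2)

lemma rowWord_append (R u v : List ℕ) :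
    rowWord R (u ++ v) =
      ((rowWord (rowWord R u).1 v).1, (rowWord R u).2 ++ (rowWord (rowWord R u).1 v).2) := by
  induction u generalizing R with
  | nil => rfl
  | cons x u ih => simp [rowWord, ih]

lemma rowWord_append_of_forall_le {w : List ℕ} (h : ∀ c ∈ A, ∀ x ∈ w, c ≤ x) :
    rowWord (A ++ B) w = (A ++ (rowWord B w).1, (rowWord B w).2) := by
  induction w generalizing B with
  | nil => rfl
  | cons x w ih =>
    simp only [List.forall_mem_cons] at h
    rw [rowWord, insRow_append_of_forall_le fun c hc => (h c hc).1, ih fun c hc => (h c hc).2,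
      rowWord]

lemma rowWord_sorted (hR : R.Pairwise (· ≤ ·)) (w : List ℕ) :
    (rowWord R w).1.Pairwise (· ≤ ·) := by
  induction w generalizing R with
  | nil => exact hR
  | cons x _ ih => exact ih (insRow_sorted hR x)

lemma length_rowWord_snd_le (R w : List ℕ) : (rowWord R w).2.length ≤ w.length := by
  induction w generalizing R with
  | nil => rfl
  | cons x w ih =>
    have := ih (insRow x R).1
    have : (insRow x R).2.toList.length ≤ 1 := by cases (insRow x R).2 <;> simp
    simp only [rowWord, List.length_append, List.length_cons]
    lia

end RowInsertion

lemma eqvGen_le_comap {α β : Type*} {r : α → α → Prop} {s : β → β → Prop} (hs : Equivalence s)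
    (f : α → β) (h : ∀ a b, r a b → s (f a) (f b)) {a b : α} (hab : Relation.EqvGen r a b) :
    s (f a) (f b) :=
  (hs.comap f).eqvGen_iff.mp (Relation.EqvGen.mono h a b hab)

/-! ### Plactic equivalence and Knuth's theorem -/

/-- An elementary Knuth transformation `x z y → z x y` (`x ≤ y < z`) or `y x z → y z x`
(`x < y ≤ z`) of three consecutive letters of a word. -/
inductive PlacticStep : List ℕ → List ℕ → Prop
  | knuth₁ {x y z : ℕ} (p s : List ℕ) (hxy : x ≤ y) (hyz : y < z) :
    PlacticStep (p ++ x :: z :: y :: s) (p ++ z :: x :: y :: s)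
  | knuth₂ {x y z : ℕ} (p s : List ℕ) (hxy : x < y) (hyz : y ≤ z) :
    PlacticStep (p ++ y :: x :: z :: s) (p ++ y :: z :: x :: s)

/-- Plactic (Knuth) equivalence of words: the equivalence relation generated by the elementary
Knuth transformations. -/
def PlacticEquiv : List ℕ → List ℕ → Prop := Relation.EqvGen PlacticStep

namespace PlacticEquiv

variable {u v w : List ℕ}

protected lemma refl (u : List ℕ) : PlacticEquiv u u := Relation.EqvGen.refl u

protected lemma symm (h : PlacticEquiv u v) : PlacticEquiv v u := Relation.EqvGen.symm _ _ h

protected lemma trans (h : PlacticEquiv u v) (h' : PlacticEquiv v w) : PlacticEquiv u w :=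
  Relation.EqvGen.trans _ _ _ h h'

lemma equivalence : Equivalence PlacticEquiv := Relation.EqvGen.is_equivalence _

lemma of_step (h : PlacticStep u v) : PlacticEquiv u v := Relation.EqvGen.rel _ _ h

lemma append_left (h : PlacticEquiv u v) (p : List ℕ) : PlacticEquiv (p ++ u) (p ++ v) := by
  refine eqvGen_le_comap equivalence (p ++ ·) (fun a b hab => of_step ?_) h
  cases hab with
  | knuth₁ q s hxy hyz => simpa using PlacticStep.knuth₁ (p ++ q) s hxy hyz
  | knuth₂ q s hxy hyz => simpa using PlacticStep.knuth₂ (p ++ q) s hxy hyz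

lemma append_right (h : PlacticEquiv u v) (s : List ℕ) : PlacticEquiv (u ++ s) (v ++ s) := by
  refine eqvGen_le_comap equivalence (· ++ s) (fun a b hab => of_step ?_) h
  cases hab with
  | knuth₁ p t hxy hyz => simpa using PlacticStep.knuth₁ p (t ++ s) hxy hyz
  | knuth₂ p t hxy hyz => simpa using PlacticStep.knuth₂ p (t ++ s) hxy hyz

lemma perm (h : PlacticEquiv u v) : u.Perm v := by
  refine eqvGen_le_comap (List.Perm.eqv ℕ) id (fun a b hab => ?_) h
  cases hab with
  | knuth₁ p s => exact (List.Perm.swap _ _ _).append_left p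
  | knuth₂ p s => exact ((List.Perm.swap _ _ _).cons _).append_left p

lemma knuth₁ {x y z : ℕ} (hxy : x ≤ y) (hyz : y < z) : PlacticEquiv [x, z, y] [z, x, y] :=
  of_step (.knuth₁ [] [] hxy hyz)

lemma knuth₂ {x y z : ℕ} (hxy : x < y) (hyz : y ≤ z) : PlacticEquiv [y, x, z] [y, z, x] :=
  of_step (.knuth₂ [] [] hxy hyz)

end PlacticEquiv

section RowWord

variable {x y z a : ℕ} {A A' B R u v : List ℕ}

lemma rowWord_pair_of_bump (h : insRow x A = (A', some a)) (hz : ∀ c ∈ A, c ≤ z) (hxz : x ≤ z) :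
    rowWord (A ++ B) [x, z] = (A' ++ (insRow z B).1, a :: (insRow z B).2.toList) ∧
      rowWord (A ++ B) [z, x] = (A' ++ (insRow z B).1, (insRow z B).2.toList ++ [a]) := by
  have hz' : ∀ c ∈ A', c ≤ z := by simpa only [h] using forall_mem_insRow (p := (· ≤ z)) hxz hz
  constructor <;>
    simp [rowWord, insRow_append_of_bump h, insRow_append_of_forall_le hz,
      insRow_append_of_forall_le hz']

/-- The effect of inserting both sides of a plactic relation into a row: the resulting rows agree,
and the bumped words are again plactically equivalent. -/
def RowEquiv (R u v : List ℕ) : Prop :=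
  (rowWord R u).1 = (rowWord R v).1 ∧ PlacticEquiv (rowWord R u).2 (rowWord R v).2

lemma rowEquiv_knuth₂ (hR : R.Pairwise (· ≤ ·)) (hxy : x < y) (hyz : y ≤ z) :
    RowEquiv R [y, x, z] [y, z, x] := by
  obtain ⟨A, B, rfl, hA, hB⟩ := exists_append_le_lt hR y
  have hAy : ∀ c ∈ A ++ [y], c ≤ y := by simpa [or_imp, forall_and] using hA
  obtain ⟨A', a, hA'⟩ := exists_insRow_eq_some (x := x) (A := A ++ [y]) ⟨y, by simp, hxy⟩
  have hy : insRow y (A ++ B) = (A ++ [y] ++ B.tail, B.head?) := by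
    simp [insRow_append_of_le_of_lt hA hB]
  obtain ⟨hxz, hzx⟩ := rowWord_pair_of_bump (B := B.tail) hA' (z := z)
    (fun c hc => (hAy c hc).trans hyz) (hxy.le.trans hyz)
  simp only [RowEquiv, rowWord.eq_2 _ y, hy, hxz, hzx, true_and]
  rcases hb : (insRow z B.tail).2 with _ | b
  · exact .refl _
  obtain ⟨d, D, rfl⟩ : ∃ d D, B = d :: D := by
    cases B with
    | nil => simp [insRow] at hb
    | cons d D => exact ⟨d, D, rfl⟩
  have hbD : b ∈ D := mem_of_insRow_eq_some (Prod.ext rfl hb)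
  exact .knuth₂ ((hAy a (mem_of_insRow_eq_some hA')).trans_lt (hB d List.mem_cons_self))
    (List.rel_of_pairwise_cons (List.pairwise_append.mp hR).2.1 hbD)

lemma rowEquiv_knuth₁_of_bump (hA : A.Pairwise (· ≤ ·)) (hAz : ∀ c ∈ A, c ≤ z)
    (hBz : ∀ c ∈ B, z < c) (hxy : x ≤ y) (hyz : y < z) (h : insRow x A = (A', some a)) :
    RowEquiv (A ++ B) [x, z, y] [z, x, y] := by
  obtain ⟨hxz, hzx⟩ := rowWord_pair_of_bump (B := B) h hAz (hxy.trans hyz.le)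
  rw [insRow_of_forall_lt hBz] at hxz hzx
  obtain ⟨C, b, hb⟩ := exists_insRow_eq_some (x := y) (A := A' ++ [z]) ⟨z, by simp, hyz⟩
  have hb' : insRow y (A' ++ z :: B.tail) = (C ++ B.tail, some b) := by
    simpa using insRow_append_of_bump (B := B.tail) hb
  have hu : rowWord (A ++ B) [x, z, y] = _ := rowWord_append (A ++ B) [x, z] [y]
  have hv : rowWord (A ++ B) [z, x, y] = _ := rowWord_append (A ++ B) [z, x] [y]
  rw [RowEquiv, hu, hv, hxz, hzx]
  simp only [rowWord, hb', true_and]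
  rcases B with _ | ⟨d, D⟩
  · exact .refl _
  have hA'z : ∀ c ∈ A' ++ [z], c ≤ z := by
    simpa [h, or_imp, forall_and] using forall_mem_insRow (p := (· ≤ z)) (hxy.trans hyz.le) hAz
  have hbA' : b ∈ A' ++ [z] := mem_of_insRow_eq_some hb
  have hab : a ≤ b := by
    rcases List.mem_append.mp hbA' with hbA | hbz
    · exact le_of_insRow_eq_some hA h b hbA (hxy.trans_lt (lt_of_insRow_eq_some hb))
    · exact List.mem_singleton.mp hbz ▸ hAz a (mem_of_insRow_eq_some h)
  exact .knuth₁ hab ((hA'z b hbA').trans_lt (hBz d List.mem_cons_self))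

lemma rowEquiv_knuth₁_of_forall_le (hB : B.Pairwise (· ≤ ·)) (hAx : ∀ c ∈ A, c ≤ x)
    (hBz : ∀ c ∈ B, z < c) (hxy : x ≤ y) (hyz : y < z) :
    RowEquiv (A ++ B) [x, z, y] [z, x, y] := by
  have hxz : x < z := hxy.trans_lt hyz
  have hA : ∀ c ∈ A, c ≤ x ∧ c ≤ y ∧ c ≤ z := fun c hc => by have := hAx c hc; lia
  rw [RowEquiv, rowWord_append_of_forall_le (w := [x, z, y]) (fun c hc => by simp [hA c hc]),
    rowWord_append_of_forall_le (w := [z, x, y]) (fun c hc => by simp [hA c hc])]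
  match B with
  | [] => simp [rowWord, insRow, hxy.not_gt, hyz, hxz, hxz.not_gt, PlacticEquiv.refl]
  | [d] =>
    have hzd : z < d := hBz d List.mem_cons_self
    simp [rowWord, insRow, hxy.not_gt, hyz, hxz, hxz.not_gt, hzd, hxz.trans hzd, PlacticEquiv.refl]
  | d :: e :: D =>
    have hzd : z < d := hBz d List.mem_cons_self
    have hde : d ≤ e := List.rel_of_pairwise_cons hB List.mem_cons_self
    simpa [rowWord, insRow, hxy.not_gt, hyz, hxz, hxz.not_gt, hzd, hxz.trans hzd,
      hzd.trans_le hde, hyz.trans (hzd.trans_le hde)] using (PlacticEquiv.knuth₂ hzd hde).symm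

lemma rowEquiv_knuth₁ (hR : R.Pairwise (· ≤ ·)) (hxy : x ≤ y) (hyz : y < z) :
    RowEquiv R [x, z, y] [z, x, y] := by
  obtain ⟨A, B, rfl, hA, hB⟩ := exists_append_le_lt hR z
  obtain ⟨hA', hB', -⟩ := List.pairwise_append.mp hR
  rcases forall_le_or_exists_insRow_eq_some x A with hAx | ⟨A', a, h⟩
  · exact rowEquiv_knuth₁_of_forall_le hB' hAx hB hxy hyz
  · exact rowEquiv_knuth₁_of_bump hA' hA hB hxy hyz h

lemma RowEquiv.append_append {p s : List ℕ} (h : RowEquiv (rowWord R p).1 u v) :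
    RowEquiv R (p ++ (u ++ s)) (p ++ (v ++ s)) := by
  simp only [RowEquiv, rowWord_append, h.1, true_and]
  exact (h.2.append_right _).append_left _

lemma PlacticEquiv.rowEquiv (h : PlacticEquiv u v) (hR : R.Pairwise (· ≤ ·)) :
    RowEquiv R u v := by
  have hequiv : Equivalence (RowEquiv R) :=
    ⟨fun u => ⟨rfl, .refl _⟩, fun h => ⟨h.1.symm, h.2.symm⟩,
      fun h h' => ⟨h.1.trans h'.1, h.2.trans h'.2⟩⟩
  refine eqvGen_le_comap hequiv id (fun a b hab => ?_) h
  cases hab with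
  | knuth₁ p s hxy hyz => exact (rowEquiv_knuth₁ (rowWord_sorted hR p) hxy hyz).append_append
  | knuth₂ p s hxy hyz => exact (rowEquiv_knuth₂ (rowWord_sorted hR p) hxy hyz).append_append

end RowWord

section Knuth

variable {x b : ℕ} {A C R u v : List ℕ} {T : Tab}

/-- Successive Schensted insertion of the letters of a word into a tableau. -/
def insWord (T : Tab) (w : List ℕ) : Tab := w.foldl (fun T x => (insTab x T).1) T

lemma insWord_append_singleton (T : Tab) (w : List ℕ) (x : ℕ) :
    insWord T (w ++ [x]) = (insTab x (insWord T w)).1 := List.foldl_append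

lemma insWord_cons_left (R : List ℕ) (T : Tab) (w : List ℕ) :
    insWord (R :: T) w = (rowWord R w).1 :: insWord T (rowWord R w).2 := by
  induction w generalizing R T with
  | nil => rfl
  | cons x w ih =>
    simp only [insWord, List.foldl_cons, rowWord, List.foldl_append, insTab] at ih ⊢
    cases (insRow x R).2 <;> simp only [ih, Option.toList, List.foldl_nil, List.foldl_cons]

lemma insWord_nil_cons (x : ℕ) (w : List ℕ) :
    insWord [] (x :: w) = (rowWord [] (x :: w)).1 :: insWord [] (rowWord [] (x :: w)).2 :=
  insWord_cons_left [x] [] w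

lemma PlacticEquiv.insWord_eq (h : PlacticEquiv u v) : insWord [] u = insWord [] v := by
  induction hn : u.length using Nat.strong_induction_on generalizing u v with
  | _ n ih =>
    match u, v with
    | [], v => rw [List.nil_perm.mp h.perm]
    | u, [] => rw [List.perm_nil.mp h.perm]
    | x :: u, y :: v =>
      obtain ⟨hrow, hbumped⟩ := h.rowEquiv List.Pairwise.nil
      have hlt : (rowWord [] (x :: u)).2.length < n :=
        (length_rowWord_snd_le [x] u).trans_lt (by simp [← hn])
      rw [insWord_nil_cons, insWord_nil_cons, hrow, ih _ hlt hbumped rfl]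

lemma placticEquiv_cons_append_singleton (hC : (b :: C).Pairwise (· ≤ ·)) (hx : x < b) :
    PlacticEquiv (b :: C ++ [x]) (b :: x :: C) := by
  induction C generalizing b with
  | nil => exact .refl _
  | cons c C ih =>
    obtain ⟨hb, hC⟩ := List.pairwise_cons.mp hC
    have hbc : b ≤ c := hb c List.mem_cons_self
    exact ((ih hC (hx.trans_le hbc)).append_left [b]).trans
      ((PlacticEquiv.knuth₂ hx hbc).symm.append_right C)

lemma placticEquiv_append_pair (hA : (A ++ [x]).Pairwise (· ≤ ·)) (hx : x < b) :
    PlacticEquiv (A ++ [b, x]) (b :: A ++ [x]) := by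
  induction A with
  | nil => exact .refl _
  | cons a A ih =>
    obtain ⟨ha, hA⟩ := List.pairwise_cons.mp hA
    refine ((ih hA).append_left [a]).trans ?_
    obtain ⟨e, D, hD⟩ := List.exists_cons_of_ne_nil (List.concat_ne_nil x A)
    have he : e ∈ A ++ [x] := by simp [hD]
    have hex : e ≤ x := by
      rcases List.mem_append.mp he with he | he
      exacts [(List.pairwise_append.mp hA).2.2 e he x (by simp), (List.mem_singleton.mp he).le]
    simpa [hD] using (PlacticEquiv.knuth₁ (ha e he) (hex.trans_lt hx)).append_right D

lemma placticEquiv_insRow (hR : R.Pairwise (· ≤ ·)) (x : ℕ) :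
    PlacticEquiv (R ++ [x]) ((insRow x R).2.toList ++ (insRow x R).1) := by
  obtain ⟨A, B, rfl, hA, hB⟩ := exists_append_le_lt hR x
  obtain ⟨hA', hB', -⟩ := List.pairwise_append.mp hR
  rw [insRow_append_of_le_of_lt hA hB]
  rcases B with _ | ⟨b, C⟩
  · simpa using PlacticEquiv.refl _
  have hx : x < b := hB b List.mem_cons_self
  have hAx : (A ++ [x]).Pairwise (· ≤ ·) := List.pairwise_append.mpr ⟨hA', by simp, by simpa⟩
  simpa using ((placticEquiv_cons_append_singleton hB' hx).append_left A).trans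
    (by simpa using (placticEquiv_append_pair hAx hx).append_right C)

/-- The row reading word of a tableau: its rows, from the last to the first. -/
def readingWord (T : Tab) : List ℕ := T.reverse.flatten

lemma readingWord_cons (R : List ℕ) (T : Tab) : readingWord (R :: T) = readingWord T ++ R := by
  simp [readingWord]

lemma insTab_rows_sorted (hT : ∀ R ∈ T, R.Pairwise (· ≤ ·)) (x : ℕ) :
    ∀ R ∈ (insTab x T).1, R.Pairwise (· ≤ ·) := by
  induction T generalizing x with
  | nil => simp [insTab]
  | cons R T ih =>
    obtain ⟨hR, hT⟩ := List.forall_mem_cons.mp hT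
    simp only [insTab]
    cases (insRow x R).2 with
    | none => exact List.forall_mem_cons.mpr ⟨insRow_sorted hR x, hT⟩
    | some b => exact List.forall_mem_cons.mpr ⟨insRow_sorted hR x, ih hT b⟩

lemma placticEquiv_readingWord_insTab (hT : ∀ R ∈ T, R.Pairwise (· ≤ ·)) (x : ℕ) :
    PlacticEquiv (readingWord T ++ [x]) (readingWord (insTab x T).1) := by
  induction T generalizing x with
  | nil => exact .refl _
  | cons R T ih =>
    obtain ⟨hR, hT⟩ := List.forall_mem_cons.mp hT
    have hrow := (placticEquiv_insRow hR x).append_left (readingWord T)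
    rw [readingWord_cons, List.append_assoc]
    refine hrow.trans ?_
    simp only [insTab]
    cases (insRow x R).2 with
    | none => simpa [readingWord_cons] using PlacticEquiv.refl _
    | some b => simpa [readingWord_cons] using (ih hT b).append_right (insRow x R).1

lemma insWord_rows_sorted (w : List ℕ) : ∀ R ∈ insWord [] w, R.Pairwise (· ≤ ·) := by
  induction w using List.reverseRecOn with
  | nil => simp [insWord]
  | append_singleton w x ih => exact insWord_append_singleton [] w x ▸ insTab_rows_sorted ih x

lemma placticEquiv_readingWord_insWord (w : List ℕ) :
    PlacticEquiv w (readingWord (insWord [] w)) := by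
  induction w using List.reverseRecOn with
  | nil => exact .refl _
  | append_singleton w x ih =>
    rw [insWord_append_singleton]
    exact (ih.append_right [x]).trans
      (placticEquiv_readingWord_insTab (insWord_rows_sorted w) x)

theorem insWord_eq_iff_placticEquiv : insWord [] u = insWord [] v ↔ PlacticEquiv u v := by
  refine ⟨fun h => ?_, PlacticEquiv.insWord_eq⟩
  exact (placticEquiv_readingWord_insWord u).trans
    (h ▸ (placticEquiv_readingWord_insWord v).symm)

end Knuth

/-! ### The symmetry of the Robinson–Schensted correspondence -/

section Symmetry

variable {x i m j a : ℕ} {S T U : Tab}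

lemma place_zero_cons (j c : ℕ) (R : List ℕ) (T : Tab) :
    place j (0, c) (R :: T) = (R ++ [j]) :: T := by
  simp [place]

lemma place_succ_cons (j r c : ℕ) (R : List ℕ) (T : Tab) :
    place j (r + 1, c) (R :: T) = R :: place j (r, c) T := by
  simp only [place, List.length_cons, Nat.add_lt_add_iff_right, List.set_cons_succ,
    List.getD_cons_succ, List.cons_append]
  split_ifs <;> rfl

lemma place_nil (j : ℕ) (c : ℕ × ℕ) : place j c [] = [[j]] := by simp [place]

lemma insTab_flatten_perm (x : ℕ) (T : Tab) : (insTab x T).1.flatten.Perm (x :: T.flatten) := by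
  induction T generalizing x with
  | nil => rfl
  | cons R T ih =>
    have hrow := insRow_perm x R
    simp only [insTab]
    cases hb : (insRow x R).2 with
    | none => simpa [hb] using hrow.append_right T.flatten
    | some b =>
      rw [hb] at hrow
      simpa using ((ih b).append_left (insRow x R).1).trans
        (by simpa using hrow.append_right T.flatten)

lemma place_flatten_perm (j : ℕ) (c : ℕ × ℕ) (T : Tab) :
    (place j c T).flatten.Perm (j :: T.flatten) := by
  obtain ⟨r, c⟩ := c
  induction T generalizing r with
  | nil => simp [place_nil]
  | cons R T ih =>
    cases r with
    | zero => simp [place_zero_cons]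
    | succ r =>
      rw [place_succ_cons]
      exact ((ih r).append_left R).trans List.perm_middle

lemma length_place_insTab (h : T.length = U.length) (x j : ℕ) :
    (place j (insTab x T).2 U).length = (insTab x T).1.length := by
  induction T generalizing U x with
  | nil => rw [List.length_eq_zero_iff.mp h.symm]; simp [place_nil, insTab]
  | cons R T ih =>
    obtain ⟨S, U, rfl⟩ := List.exists_cons_of_length_eq_add_one h.symm
    simp only [insTab]
    cases (insRow x R).2 with
    | none => simpa [place_zero_cons] using h.symm
    | some b => simpa [place_succ_cons] using ih (by simpa using h) b

lemma insTab_cons_of_forall_le {R : List ℕ} (h : ∀ c ∈ R, c ≤ x) :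
    insTab x (R :: T) = ((R ++ [x]) :: T, 0, R.length) := by
  simp only [insTab, insRow_of_forall_le h]

lemma insTab_cons_of_bump {R R' : List ℕ} (h : insRow x R = (R', some a)) :
    insTab x (R :: T) = (R' :: (insTab a T).1, (insTab a T).2.1 + 1, (insTab a T).2.2) := by
  simp only [insTab, h]

lemma insTab_eq_place_of_forall_le (hlen : T.length = U.length) (hT : ∀ c ∈ T.flatten, c ≤ m)
    (hU : ∀ c ∈ U.flatten, c ≤ j) : (insTab m T).1 = place m (insTab j U).2 T := by
  match T, U with
  | [], _ => rw [place_nil, insTab]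
  | R :: T, S :: U =>
    simp only [List.flatten_cons, List.forall_mem_append] at hT hU
    rw [insTab_cons_of_forall_le hT.1, insTab_cons_of_forall_le hU.1, place_zero_cons]

/-- Adding a new greatest letter `m` commutes with adding a new greatest label `j`: the left side
adds `(i, m)` and then the pair `(j, x)`, the right side first `(j, x)`. The statement for the
recording tableaux is the same one with `T` and `U` exchanged. -/
lemma insTab_place_comm (hlen : T.length = U.length) (hT : ∀ c ∈ T.flatten, c < m)
    (hU : ∀ c ∈ U.flatten, c < j) (hx : x < m) (hi : i < j) :
    (insTab x (place m (insTab i U).2 T)).1 =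
      place m (insTab i (place j (insTab x T).2 U)).2 (insTab x T).1 := by
  induction T generalizing U x i with
  | nil =>
    rw [List.length_eq_zero_iff.mp hlen.symm]
    simp [place_nil, insTab, insRow, hx, hi, place_succ_cons]
  | cons R T ih =>
    obtain ⟨S, U, rfl⟩ := List.exists_cons_of_length_eq_add_one hlen.symm
    rw [List.length_cons, List.length_cons, Nat.add_right_cancel_iff] at hlen
    rw [List.flatten_cons, List.forall_mem_append] at hT hU
    rcases forall_le_or_exists_insRow_eq_some x R with hRx | ⟨R', a, hR⟩ <;>
      rcases forall_le_or_exists_insRow_eq_some i S with hSi | ⟨S', b, hS⟩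
    · have hRm : insRow x (R ++ [m]) = (R ++ [x], some m) :=
        insRow_append_of_le_of_lt hRx (by simpa using hx)
      have hSj : insRow i (S ++ [j]) = (S ++ [i], some j) :=
        insRow_append_of_le_of_lt hSi (by simpa using hi)
      simp only [insTab_cons_of_forall_le hSi, insTab_cons_of_forall_le hRx, place_zero_cons,
        place_succ_cons, insTab_cons_of_bump hRm, insTab_cons_of_bump hSj,
        insTab_eq_place_of_forall_le hlen (fun c hc => (hT.2 c hc).le) fun c hc => (hU.2 c hc).le]
    · simp only [insTab_cons_of_bump hS, insTab_cons_of_forall_le hRx, place_zero_cons,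
        place_succ_cons, insTab_cons_of_bump (insRow_append_of_bump (B := [j]) hS)]
    · simp only [insTab_cons_of_bump hR, insTab_cons_of_forall_le hSi, place_zero_cons,
        place_succ_cons, insTab_cons_of_bump (insRow_append_of_bump (B := [m]) hR)]
    · simp only [insTab_cons_of_bump hR, insTab_cons_of_bump hS, place_succ_cons, Prod.mk.eta,
        ih hlen hT.2 hU.2 (hT.1 a (mem_of_insRow_eq_some hR))
          (hU.1 b (mem_of_insRow_eq_some hS))]

/-- One step of the Robinson–Schensted correspondence for a two-line array: the value `p.2` is
inserted into the insertion tableau `st.1`, and its label `p.1` is placed in the recording tableau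
`st.2`. -/
def rsStep (st : Tab × Tab) (p : ℕ × ℕ) : Tab × Tab :=
  ((insTab p.2 st.1).1, place p.1 (insTab p.2 st.1).2 st.2)

/-- The pair of insertion and recording tableaux of a two-line array of pairs (label, value). -/
def rs (l : List (ℕ × ℕ)) : Tab × Tab := l.foldl rsStep ([], [])

lemma rs_append_singleton (l : List (ℕ × ℕ)) (p : ℕ × ℕ) : rs (l ++ [p]) = rsStep (rs l) p :=
  List.foldl_append

lemma rs_fst (l : List (ℕ × ℕ)) : (rs l).1 = insWord [] (l.map Prod.snd) := by
  induction l using List.reverseRecOn with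
  | nil => rfl
  | append_singleton l p ih =>
    rw [rs_append_singleton, List.map_append, List.map_singleton, insWord_append_singleton, ← ih,
      rsStep]

lemma length_rs (l : List (ℕ × ℕ)) : (rs l).1.length = (rs l).2.length := by
  induction l using List.reverseRecOn with
  | nil => rfl
  | append_singleton l p ih =>
    rw [rs_append_singleton]
    exact (length_place_insTab ih p.2 p.1).symm

lemma rs_flatten_perm (l : List (ℕ × ℕ)) :
    (rs l).1.flatten.Perm (l.map Prod.snd) ∧ (rs l).2.flatten.Perm (l.map Prod.fst) := by
  induction l using List.reverseRecOn with
  | nil => exact ⟨.refl _, .refl _⟩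
  | append_singleton l p ih =>
    rw [rs_append_singleton, List.map_append, List.map_append]
    exact ⟨((insTab_flatten_perm _ _).trans (ih.1.cons _)).trans
        (List.perm_append_singleton _ _).symm,
      ((place_flatten_perm _ _ _).trans (ih.2.cons _)).trans
        (List.perm_append_singleton _ _).symm⟩

lemma forall_mem_rs_fst {l : List (ℕ × ℕ)} {r : ℕ → Prop} (h : ∀ q ∈ l, r q.2) :
    ∀ c ∈ (rs l).1.flatten, r c := fun _ hc =>
  List.forall_mem_map.mpr h _ ((rs_flatten_perm l).1.subset hc)

lemma forall_mem_rs_snd {l : List (ℕ × ℕ)} {r : ℕ → Prop} (h : ∀ q ∈ l, r q.1) :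
    ∀ c ∈ (rs l).2.flatten, r c := fun _ hc =>
  List.forall_mem_map.mpr h _ ((rs_flatten_perm l).2.subset hc)

/-- The step `rsStep` with the roles of the two tableaux, and of labels and values, exchanged. -/
def dualRsStep (st : Tab × Tab) (p : ℕ × ℕ) : Tab × Tab := (rsStep st.swap p.swap).swap

lemma rsStep_dualRsStep_comm {st : Tab × Tab} {p q : ℕ × ℕ} (hlen : st.1.length = st.2.length)
    (h₁ : ∀ c ∈ st.1.flatten, c < p.2) (h₂ : ∀ c ∈ st.2.flatten, c < q.1)
    (hp : p.1 < q.1) (hq : q.2 < p.2) :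
    rsStep (dualRsStep st p) q = dualRsStep (rsStep st q) p :=
  Prod.ext (insTab_place_comm hlen h₁ h₂ hq hp) (insTab_place_comm hlen.symm h₂ h₁ hp hq).symm

lemma rs_append_cons_of_max {l₁ l₂ : List (ℕ × ℕ)} {p : ℕ × ℕ}
    (hlabel : (l₁ ++ p :: l₂).Pairwise (fun q r => q.1 < r.1))
    (hmax : ∀ q ∈ l₁ ++ l₂, q.2 < p.2) :
    rs (l₁ ++ p :: l₂) = dualRsStep (rs (l₁ ++ l₂)) p := by
  induction l₂ using List.reverseRecOn with
  | nil =>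
    rw [List.append_nil] at hmax ⊢
    have hvalue := forall_mem_rs_fst (r := (· ≤ p.2)) fun q hq => (hmax q hq).le
    have hlast := forall_mem_rs_snd (r := (· ≤ p.1)) fun q hq =>
      ((List.pairwise_append.mp hlabel).2.2 q hq p List.mem_cons_self).le
    rw [rs_append_singleton]
    exact Prod.ext (insTab_eq_place_of_forall_le (length_rs l₁) hvalue hlast)
      (insTab_eq_place_of_forall_le (length_rs l₁).symm hlast hvalue).symm
  | append_singleton l₂ q ih =>
    rw [← List.cons_append, ← List.append_assoc] at hlabel ⊢
    rw [← List.append_assoc, List.forall_mem_append] at hmax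
    obtain ⟨hlabel, -, hlast⟩ := List.pairwise_append.mp hlabel
    have hlast : ∀ r ∈ l₁ ++ p :: l₂, r.1 < q.1 := fun r hr => hlast r hr q (by simp)
    rw [← List.append_assoc, rs_append_singleton, rs_append_singleton, ih hlabel hmax.1]
    exact rsStep_dualRsStep_comm (length_rs _) (forall_mem_rs_fst hmax.1)
      (forall_mem_rs_snd fun r hr => hlast r (by grind)) (hlast p (by simp)) (hmax.2 q (by simp))

/-- Schützenberger's symmetry theorem. -/
theorem rs_map_swap {l l' : List (ℕ × ℕ)} (hl : l.Pairwise (fun p q => p.1 < q.1))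
    (hl' : l'.Pairwise (fun p q => p.2 < q.2)) (h : l.Perm l') :
    rs (l'.map Prod.swap) = (rs l).swap := by
  induction l' using List.reverseRecOn generalizing l with
  | nil => rw [List.perm_nil.mp h]; rfl
  | append_singleton l' p ih =>
    obtain ⟨hl', -, hlast⟩ := List.pairwise_append.mp hl'
    obtain ⟨l₁, l₂, rfl⟩ := List.append_of_mem (h.symm.subset (by simp : p ∈ l' ++ [p]))
    have h' : (l₁ ++ l₂).Perm l' :=
      ((List.perm_middle.symm.trans h).trans (List.perm_append_singleton p l')).cons_inv
    have hmax : ∀ q ∈ l₁ ++ l₂, q.2 < p.2 := fun q hq => hlast q (h'.subset hq) p (by simp)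
    rw [rs_append_cons_of_max hl hmax, List.map_append, List.map_singleton, rs_append_singleton,
      ih (hl.sublist (by simp)) hl' h', dualRsStep, Prod.swap_swap]

lemma rs_snd {l l' : List (ℕ × ℕ)} (hl : l.Pairwise (fun p q => p.1 < q.1))
    (hl' : l'.Pairwise (fun p q => p.2 < q.2)) (h : l.Perm l') :
    (rs l).2 = insWord [] (l'.map Prod.fst) := by
  have hswap := rs_fst (l'.map Prod.swap)
  rw [rs_map_swap hl hl' h, List.map_map] at hswap
  exact hswap

end Symmetry

/-! ### The length function of `W_n` -/

section Inversions

variable {α β : Type*} [LinearOrder α] [LinearOrder β]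

/-- The inversions of the restriction of `f` to the finite set `S`. -/
def inversions (S : Finset α) (f : α → β) : Finset (α × α) :=
  {p ∈ S ×ˢ S | p.1 < p.2 ∧ f p.2 < f p.1}

lemma inversions_comp_swap {S : Finset α} {f : α → β} {a b : α} (ha : a ∈ S) (hb : b ∈ S)
    (hab : a < b) (hadj : ∀ c ∈ S, c ≤ a ∨ b ≤ c) (hf : f a < f b) :
    inversions S (f ∘ Equiv.swap a b) = insert (a, b) ((inversions S f).map
      ((Equiv.swap a b).prodCongr (Equiv.swap a b)).toEmbedding) := by
  ext ⟨p, q⟩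
  simp only [inversions, Finset.mem_insert, Finset.mem_map_equiv, Finset.mem_filter,
    Finset.mem_product, Equiv.prodCongr_symm, Equiv.symm_swap, Equiv.prodCongr_apply,
    Prod.map_apply, Prod.mk.injEq, Function.comp_apply, Equiv.swap_apply_def]
  grind

lemma card_inversions_comp_swap {S : Finset α} {f : α → β} {a b : α} (ha : a ∈ S) (hb : b ∈ S)
    (hab : a < b) (hadj : ∀ c ∈ S, c ≤ a ∨ b ≤ c) (hf : f a < f b) :
    (inversions S (f ∘ Equiv.swap a b)).card = (inversions S f).card + 1 := by
  rw [inversions_comp_swap ha hb hab hadj hf, Finset.card_insert_of_notMem, Finset.card_map]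
  simp [inversions, Finset.mem_map_equiv, hab.not_gt]

end Inversions

section SignedPermutations

variable {n i j : ℕ} {x y : P}

lemma one_mem_Wset : 1 ∈ Wset n := ⟨fun _ => rfl, fun _ _ => rfl⟩

lemma mul_mem_Wset (hx : x ∈ Wset n) (hy : y ∈ Wset n) : x * y ∈ Wset n :=
  ⟨fun a => by simp [hx.1, hy.1], fun a ha => by simp [hx.2, hy.2, ha]⟩

lemma inv_mem_Wset (hx : x ∈ Wset n) : x⁻¹ ∈ Wset n :=
  ⟨fun a => Equiv.Perm.inv_eq_iff_eq.mpr (by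
      rw [hx.1, ← Equiv.Perm.mul_apply, mul_inv_cancel, Equiv.Perm.one_apply]),
    fun a ha => Equiv.Perm.inv_eq_iff_eq.mpr (hx.2 a ha).symm⟩

lemma sgen_mem_Wset (hi : 1 ≤ i) (hin : i + 1 ≤ n) : sgen i ∈ Wset n := by
  constructor <;> intro a <;> simp only [sgen, Equiv.Perm.mul_apply, Equiv.swap_apply_def] <;> grind

lemma ttgen_mem_Wset (hi : 1 ≤ i) (hin : i ≤ n) : ttgen i ∈ Wset n := by
  constructor <;> intro a <;> simp only [ttgen, Equiv.swap_apply_def] <;> grind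

lemma Wset_apply_zero (hx : x ∈ Wset n) : x 0 = 0 := by
  have := hx.1 0
  rw [neg_zero] at this
  lia

lemma Wset_apply_ne_zero (hx : x ∈ Wset n) {a : ℤ} (ha : a ≠ 0) : x a ≠ 0 := fun h =>
  ha (x.injective (h.trans (Wset_apply_zero hx).symm))

lemma abs_Wset_apply_le (hx : x ∈ Wset n) {a : ℤ} (ha : |a| ≤ n) : |x a| ≤ n := by
  by_contra! h
  have := x.injective (hx.2 _ h)
  lia

lemma tgen_eq_ttgen : tgen = ttgen 1 := rfl

lemma sgen_apply_natCast (hi : 1 ≤ i) (j : ℕ) : sgen i j = (Equiv.swap i (i + 1) j : ℕ) := by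
  simp only [sgen, Equiv.Perm.mul_apply, Equiv.swap_apply_def]
  grind

lemma sgen_mul_self (hi : 1 ≤ i) : sgen i * sgen i = 1 := by
  ext a
  simp only [sgen, Equiv.Perm.mul_apply, Equiv.Perm.one_apply, Equiv.swap_apply_def]
  grind

lemma sgen_inv (hi : 1 ≤ i) : (sgen i)⁻¹ = sgen i := inv_eq_of_mul_eq_one_left (sgen_mul_self hi)

lemma sgen_mul_cancel_left (hi : 1 ≤ i) (x : P) : sgen i * (sgen i * x) = x := by
  rw [← mul_assoc, sgen_mul_self hi, one_mul]

lemma ttgen_mul_cancel_left (i : ℕ) (x : P) : ttgen i * (ttgen i * x) = x :=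
  Equiv.swap_mul_self_mul _ _ x

lemma ttgen_succ_mul (hi : 1 ≤ i) (x : P) :
    ttgen (i + 1) * x = sgen i * (ttgen i * (sgen i * x)) := by
  have hsucc : sgen i i = (i + 1 : ℕ) := by rw [sgen_apply_natCast hi, Equiv.swap_apply_left]
  rw [ttgen, ← hsucc, ← (sgen_mem_Wset hi le_rfl).1, Equiv.swap_apply_apply, sgen_inv hi, ttgen]
  simp only [mul_assoc]

/-- The `j`-th letter of the one-line notation of `x⁻¹`. -/
def letter (x : P) (j : ℕ) : ℤ := x⁻¹ j

lemma letter_injective (x : P) : Function.Injective (letter x) :=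
  x⁻¹.injective.comp Nat.cast_injective

lemma letter_ne_zero (hx : x ∈ Wset n) (hj : 1 ≤ j) : letter x j ≠ 0 :=
  Wset_apply_ne_zero (inv_mem_Wset hx) (by lia)

lemma eq_of_letter_eq (hx : x ∈ Wset n) (hy : y ∈ Wset n)
    (h : ∀ j, 1 ≤ j → j ≤ n → letter x j = letter y j) : x = y := by
  have hnat : ∀ j : ℕ, x⁻¹ j = y⁻¹ j := by
    intro j
    obtain rfl | hj := Nat.eq_zero_or_pos j
    · exact (Wset_apply_zero (inv_mem_Wset hx)).trans (Wset_apply_zero (inv_mem_Wset hy)).symm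
    obtain hjn | hjn := le_or_gt j n
    · exact h j hj hjn
    · have hj' : (n : ℤ) < |(j : ℤ)| := by rwa [Nat.abs_cast, Nat.cast_lt]
      exact ((inv_mem_Wset hx).2 j hj').trans ((inv_mem_Wset hy).2 j hj').symm
  rw [← inv_inj]
  ext a
  obtain ⟨j, rfl | rfl⟩ := a.eq_nat_or_neg
  · exact hnat j
  · rw [(inv_mem_Wset hx).1, (inv_mem_Wset hy).1, hnat]

lemma letter_sgen_mul (hi : 1 ≤ i) (x : P) (j : ℕ) :
    letter (sgen i * x) j = letter x (Equiv.swap i (i + 1) j) := by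
  rw [letter, mul_inv_rev, sgen_inv hi, Equiv.Perm.mul_apply, sgen_apply_natCast hi, letter]

lemma letter_sgen_mul_left (hi : 1 ≤ i) (x : P) :
    letter (sgen i * x) i = letter x (i + 1) := by
  rw [letter_sgen_mul hi, Equiv.swap_apply_left]

lemma letter_sgen_mul_right (hi : 1 ≤ i) (x : P) :
    letter (sgen i * x) (i + 1) = letter x i := by
  rw [letter_sgen_mul hi, Equiv.swap_apply_right]

lemma letter_ttgen_mul_self (hx : x ∈ Wset n) (i : ℕ) :
    letter (ttgen i * x) i = -letter x i := by
  rw [letter, mul_inv_rev, ttgen, Equiv.swap_inv, Equiv.Perm.mul_apply, Equiv.swap_apply_left,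
    (inv_mem_Wset hx).1, letter]

lemma letter_ttgen_mul_of_ne (hi : 1 ≤ i) (hij : j ≠ i) (x : P) :
    letter (ttgen i * x) j = letter x j := by
  rw [letter, mul_inv_rev, ttgen, Equiv.swap_inv, Equiv.Perm.mul_apply,
    Equiv.swap_apply_of_ne_of_ne (by lia) (by lia), letter]

/-- Twice the length of `x`. The length counts the orbits under `a ↦ -a` of the inversions of `x⁻¹`
on `I_n`; all orbits have two elements except for the inversions `(-a, a)`, one for each negative
letter, so these have to be counted again. -/
noncomputable def doubleLength (n : ℕ) (x : P) : ℕ :=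
  (inversions ((Finset.Icc (-n : ℤ) n).erase 0) ⇑x⁻¹).card +
    {j ∈ Finset.Icc 1 n | letter x j < 0}.card

lemma doubleLength_one (n : ℕ) : doubleLength n 1 = 0 := by
  have hinv : inversions ((Finset.Icc (-n : ℤ) n).erase 0) ⇑(1 : P)⁻¹ = ∅ :=
    Finset.filter_eq_empty_iff.2 fun _ _ h => h.1.not_gt h.2
  have hneg : {j ∈ Finset.Icc 1 n | letter 1 j < 0} = ∅ :=
    Finset.filter_eq_empty_iff.2 fun j _ => by simp [letter]
  rw [doubleLength, hinv, hneg, Finset.card_empty, Finset.card_empty]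

lemma card_inversions_inv_sgen_mul (hx : x ∈ Wset n) (hi : 1 ≤ i) (hin : i + 1 ≤ n)
    (h : letter x i < letter x (i + 1)) :
    (inversions ((Finset.Icc (-n : ℤ) n).erase 0) ⇑(sgen i * x)⁻¹).card =
      (inversions ((Finset.Icc (-n : ℤ) n).erase 0) ⇑x⁻¹).card + 2 := by
  have hcomp : ⇑(sgen i * x)⁻¹ =
      (⇑x⁻¹ ∘ Equiv.swap (-(i + 1) : ℤ) (-i)) ∘ Equiv.swap (i : ℤ) (i + 1) := by
    rw [sgen, mul_inv_rev, mul_inv_rev, Equiv.swap_inv, Equiv.swap_inv, Equiv.swap_comm (-(i : ℤ))]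
    rfl
  have hmem : ∀ a : ℤ, a ∈ (Finset.Icc (-n : ℤ) n).erase 0 ↔ a ≠ 0 ∧ -n ≤ a ∧ a ≤ n := by simp
  have hneg : x⁻¹ (-(i + 1) : ℤ) < x⁻¹ (-i : ℤ) := by
    rw [(inv_mem_Wset hx).1, (inv_mem_Wset hx).1, neg_lt_neg_iff]
    exact_mod_cast h
  have hpos : (⇑x⁻¹ ∘ Equiv.swap (-(i + 1) : ℤ) (-i)) i <
      (⇑x⁻¹ ∘ Equiv.swap (-(i + 1) : ℤ) (-i)) (i + 1) := by
    rw [Function.comp_apply, Function.comp_apply, Equiv.swap_apply_of_ne_of_ne (by lia) (by lia),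
      Equiv.swap_apply_of_ne_of_ne (by lia) (by lia)]
    exact_mod_cast h
  rw [hcomp, card_inversions_comp_swap ((hmem _).2 (by lia)) ((hmem _).2 (by lia)) (by lia)
      (fun c _ => by lia) hpos,
    card_inversions_comp_swap ((hmem _).2 (by lia)) ((hmem _).2 (by lia)) (by lia)
      (fun c _ => by lia) hneg]

lemma card_inversions_inv_tgen_mul (hx : x ∈ Wset n) (hn : 1 ≤ n) (h : 0 < letter x 1) :
    (inversions ((Finset.Icc (-n : ℤ) n).erase 0) ⇑(tgen * x)⁻¹).card =
      (inversions ((Finset.Icc (-n : ℤ) n).erase 0) ⇑x⁻¹).card + 1 := by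
  have hcomp : ⇑(tgen * x)⁻¹ = ⇑x⁻¹ ∘ Equiv.swap (-1) 1 := by
    rw [tgen, mul_inv_rev, Equiv.swap_inv, Equiv.swap_comm]
    rfl
  have hmem : ∀ a : ℤ, a ∈ (Finset.Icc (-n : ℤ) n).erase 0 ↔ a ≠ 0 ∧ -n ≤ a ∧ a ≤ n := by simp
  have hlt : x⁻¹ (-1) < x⁻¹ 1 := by
    rw [(inv_mem_Wset hx).1]
    exact neg_lt_self h
  rw [hcomp, card_inversions_comp_swap ((hmem _).2 (by lia)) ((hmem _).2 (by lia)) (by lia)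
    (fun c hc => by have := (hmem c).1 hc; lia) hlt]

lemma doubleLength_sgen_mul (hx : x ∈ Wset n) (hi : 1 ≤ i) (hin : i + 1 ≤ n)
    (h : letter x i < letter x (i + 1)) :
    doubleLength n (sgen i * x) = doubleLength n x + 2 := by
  have hcard : {j ∈ Finset.Icc 1 n | letter (sgen i * x) j < 0}.card =
      {j ∈ Finset.Icc 1 n | letter x j < 0}.card := by
    refine Finset.card_equiv (Equiv.swap i (i + 1)) fun j => ?_
    rw [Finset.mem_filter, Finset.mem_filter, letter_sgen_mul hi]
    refine and_congr_left' ?_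
    simp only [Finset.mem_Icc, Equiv.swap_apply_def]
    grind
  rw [doubleLength, card_inversions_inv_sgen_mul hx hi hin h, hcard, doubleLength]
  lia

lemma doubleLength_tgen_mul (hx : x ∈ Wset n) (hn : 1 ≤ n) (h : 0 < letter x 1) :
    doubleLength n (tgen * x) = doubleLength n x + 2 := by
  have hinsert : {j ∈ Finset.Icc 1 n | letter (tgen * x) j < 0} =
      insert 1 {j ∈ Finset.Icc 1 n | letter x j < 0} := by
    ext j
    rw [Finset.mem_insert, Finset.mem_filter, Finset.mem_filter, tgen_eq_ttgen]
    obtain rfl | hj := eq_or_ne j 1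
    · rw [letter_ttgen_mul_self hx]
      simp [hn, h]
    · rw [letter_ttgen_mul_of_ne le_rfl hj]
      simp [hj]
  rw [doubleLength, card_inversions_inv_tgen_mul hx hn h, hinsert, Finset.card_insert_of_notMem,
    doubleLength]
  · lia
  · simp [h.le]

lemma tgen_mem_Sset (n : ℕ) : tgen ∈ Sset n := Set.mem_insert _ _

lemma sgen_mem_Sset (hi : 1 ≤ i) (hin : i + 1 ≤ n) : sgen i ∈ Sset n :=
  Or.inr ⟨i, ⟨hi, by lia⟩, rfl⟩

lemma mem_Wset_of_mem_Sset (hn : 1 ≤ n) {g : P} (hg : g ∈ Sset n) : g ∈ Wset n := by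
  obtain rfl | ⟨i, ⟨hi, hin⟩, rfl⟩ := hg
  · exact ttgen_mem_Wset le_rfl hn
  · exact sgen_mem_Wset hi (by lia)

lemma doubleLength_sgen_mul_of_gt (hx : x ∈ Wset n) (hi : 1 ≤ i) (hin : i + 1 ≤ n)
    (h : letter x (i + 1) < letter x i) :
    doubleLength n x = doubleLength n (sgen i * x) + 2 := by
  conv_lhs => rw [← sgen_mul_cancel_left hi x]
  refine doubleLength_sgen_mul (mul_mem_Wset (sgen_mem_Wset hi hin) hx) hi hin ?_
  rwa [letter_sgen_mul_left hi, letter_sgen_mul_right hi]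

lemma doubleLength_tgen_mul_of_neg (hx : x ∈ Wset n) (hn : 1 ≤ n) (h : letter x 1 < 0) :
    doubleLength n x = doubleLength n (tgen * x) + 2 := by
  conv_lhs => rw [← ttgen_mul_cancel_left 1 x]
  refine doubleLength_tgen_mul (mul_mem_Wset (ttgen_mem_Wset le_rfl hn) hx) hn ?_
  rwa [letter_ttgen_mul_self hx, neg_pos]

lemma doubleLength_mul_le (hx : x ∈ Wset n) (hn : 1 ≤ n) {g : P} (hg : g ∈ Sset n) :
    doubleLength n (g * x) ≤ doubleLength n x + 2 := by
  obtain rfl | ⟨i, ⟨hi, hin⟩, rfl⟩ := hg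
  · obtain h | h := (letter_ne_zero hx le_rfl).lt_or_gt
    · have := doubleLength_tgen_mul_of_neg hx hn h
      lia
    · exact (doubleLength_tgen_mul hx hn h).le
  · obtain h | h := ((letter_injective x).ne i.lt_succ_self.ne).lt_or_gt
    · exact (doubleLength_sgen_mul hx hi (by lia) h).le
    · have := doubleLength_sgen_mul_of_gt hx hi (by lia) h
      lia

lemma eq_one_of_letter_lt (hx : x ∈ Wset n) (h₁ : 1 ≤ n → 0 < letter x 1)
    (h : ∀ i, 1 ≤ i → i + 1 ≤ n → letter x i < letter x (i + 1)) : x = 1 := by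
  have hlower : ∀ j, 1 ≤ j → j ≤ n → j ≤ letter x j := by
    intro j hj
    induction j, hj using Nat.le_induction with
    | base => exact h₁
    | succ j hj ih =>
      intro hjn
      have := h j hj hjn
      have := ih (by lia)
      lia
  have hupper : ∀ k j, 1 ≤ j → j + k = n → letter x j ≤ j := by
    intro k
    induction k with
    | zero =>
      intro j _ hjn
      exact (abs_le.1 (abs_Wset_apply_le (inv_mem_Wset hx) (a := j)
        (by rw [Nat.abs_cast]; lia))).2.trans (by lia)
    | succ k ih =>
      intro j hj hjn
      have := h j hj (by lia)
      have := ih (j + 1) (by lia) (by lia)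
      lia
  exact eq_of_letter_eq hx one_mem_Wset fun j hj hjn =>
    (hupper (n - j) j hj (by lia)).antisymm (hlower j hj hjn)

lemma exists_doubleLength_eq_add_two (hx : x ∈ Wset n) (hx1 : x ≠ 1) :
    ∃ g ∈ Sset n, doubleLength n x = doubleLength n (g * x) + 2 := by
  contrapose! hx1
  refine eq_one_of_letter_lt hx (fun hn => ?_) fun i hi hin => ?_
  · by_contra! h
    exact hx1 _ (tgen_mem_Sset n)
      (doubleLength_tgen_mul_of_neg hx hn (h.lt_of_ne (letter_ne_zero hx le_rfl)))
  · by_contra! h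
    exact hx1 _ (sgen_mem_Sset hi hin) (doubleLength_sgen_mul_of_gt hx hi hin
      (h.lt_of_ne ((letter_injective x).ne i.succ_ne_self)))

lemma doubleLength_prod_le (hn : 1 ≤ n) (l : List P) (hl : ∀ g ∈ l, g ∈ Sset n) :
    l.prod ∈ Wset n ∧ doubleLength n l.prod ≤ 2 * l.length := by
  induction l with
  | nil => exact ⟨one_mem_Wset, (doubleLength_one n).le⟩
  | cons g l ih =>
    obtain ⟨hmem, hle⟩ := ih fun g' hg' => hl g' (.tail g hg')
    have hg := hl g (.head l)
    have := doubleLength_mul_le hmem hn hg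
    rw [List.prod_cons, List.length_cons]
    exact ⟨mul_mem_Wset (mem_Wset_of_mem_Sset hn hg) hmem, by lia⟩

lemma exists_prod_eq_of_mem_Wset (hn : 1 ≤ n) (hx : x ∈ Wset n) :
    ∃ l : List P, (∀ g ∈ l, g ∈ Sset n) ∧ l.prod = x ∧ 2 * l.length = doubleLength n x := by
  induction hk : doubleLength n x using Nat.strong_induction_on generalizing x with
  | _ k ih =>
  obtain rfl | hx1 := eq_or_ne x 1
  · exact ⟨[], by simp, rfl, by rw [← hk, doubleLength_one, List.length_nil]⟩
  obtain ⟨g, hg, hgx⟩ := exists_doubleLength_eq_add_two hx hx1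
  obtain ⟨l, hl, hprod, hlen⟩ :=
    ih _ (by lia) (mul_mem_Wset (mem_Wset_of_mem_Sset hn hg) hx) rfl
  have hgg : g * (g * x) = x := by
    obtain rfl | ⟨i, ⟨hi, -⟩, rfl⟩ := hg
    exacts [ttgen_mul_cancel_left 1 x, sgen_mul_cancel_left hi x]
  exact ⟨g :: l, List.forall_mem_cons.2 ⟨hg, hl⟩, by rw [List.prod_cons, hprod, hgg],
    by rw [List.length_cons]; lia⟩

theorem two_mul_len (hn : 1 ≤ n) (hx : x ∈ Wset n) : 2 * len n x = doubleLength n x := by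
  obtain ⟨l, hl, hprod, hlen⟩ := exists_prod_eq_of_mem_Wset hn hx
  have hle : len n x ≤ l.length := Nat.sInf_le ⟨l, hl, hprod, rfl⟩
  obtain ⟨l', hl', rfl, hlen'⟩ : len n x ∈ {k | ∃ l : List P, (∀ g ∈ l, g ∈ Sset n) ∧
      l.prod = x ∧ l.length = k} := Nat.sInf_mem ⟨_, l, hl, hprod, rfl⟩
  have := (doubleLength_prod_le hn l' hl').2
  lia

lemma len_sgen_mul (hx : x ∈ Wset n) (hi : 1 ≤ i) (hin : i + 1 ≤ n)
    (h : letter x i < letter x (i + 1)) : len n (sgen i * x) = len n x + 1 := by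
  have := two_mul_len (by lia) hx
  have := two_mul_len (by lia) (mul_mem_Wset (sgen_mem_Wset hi hin) hx)
  have := doubleLength_sgen_mul hx hi hin h
  lia

lemma len_eq_len_sgen_mul_add_one (hx : x ∈ Wset n) (hi : 1 ≤ i) (hin : i + 1 ≤ n)
    (h : letter x (i + 1) < letter x i) : len n x = len n (sgen i * x) + 1 := by
  have := two_mul_len (by lia) hx
  have := two_mul_len (by lia) (mul_mem_Wset (sgen_mem_Wset hi hin) hx)
  have := doubleLength_sgen_mul_of_gt hx hi hin h
  lia

lemma len_sgen_mul_lt_iff (hx : x ∈ Wset n) (hi : 1 ≤ i) (hin : i + 1 ≤ n) :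
    len n (sgen i * x) < len n x ↔ letter x (i + 1) < letter x i := by
  obtain h | h := ((letter_injective x).ne i.lt_succ_self.ne).lt_or_gt
  · simp [len_sgen_mul hx hi hin h, h.not_gt]
  · simp [len_eq_len_sgen_mul_add_one hx hi hin h, h]

lemma len_lt_len_ttgen_mul (hx : x ∈ Wset n) (hj : 1 ≤ j) (hjn : j ≤ n) (h : 0 < letter x j) :
    len n x < len n (ttgen j * x) := by
  induction j, hj using Nat.le_induction generalizing x with
  | base =>
    have := two_mul_len hjn hx
    have := two_mul_len hjn (mul_mem_Wset (ttgen_mem_Wset le_rfl hjn) hx)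
    have := doubleLength_tgen_mul hx hjn h
    rw [tgen_eq_ttgen] at this
    lia
  | succ j hj ih =>
    have hy : sgen j * x ∈ Wset n := mul_mem_Wset (sgen_mem_Wset hj hjn) hx
    have hty : ttgen j * (sgen j * x) ∈ Wset n := mul_mem_Wset (ttgen_mem_Wset hj (by lia)) hy
    have hlt := ih hy (by lia) (by rwa [letter_sgen_mul_left hj])
    rw [ttgen_succ_mul hj]
    obtain hasc | hdesc := ((letter_injective x).ne j.lt_succ_self.ne).lt_or_gt
    · have := len_sgen_mul hx hj hjn hasc
      obtain h' | h' := ((letter_injective (ttgen j * (sgen j * x))).ne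
        j.lt_succ_self.ne).lt_or_gt
      · have := len_sgen_mul hty hj hjn h'
        lia
      · have := len_eq_len_sgen_mul_add_one hty hj hjn h'
        lia
    · have := len_eq_len_sgen_mul_add_one hx hj hjn hdesc
      have := len_sgen_mul hty hj hjn (by
        rw [letter_ttgen_mul_self hy, letter_sgen_mul_left hj,
          letter_ttgen_mul_of_ne hj j.succ_ne_self, letter_sgen_mul_right hj]
        lia)
      lia

lemma len_ttgen_mul_lt_iff (hx : x ∈ Wset n) (hj : 1 ≤ j) (hjn : j ≤ n) :
    len n (ttgen j * x) < len n x ↔ letter x j < 0 := by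
  obtain h | h := (letter_ne_zero hx hj).lt_or_gt
  · have := len_lt_len_ttgen_mul (mul_mem_Wset (ttgen_mem_Wset hj hjn) hx) hj hjn
      (by rwa [letter_ttgen_mul_self hx, neg_pos])
    rw [ttgen_mul_cancel_left] at this
    exact iff_of_true this h
  · exact iff_of_false (len_lt_len_ttgen_mul hx hj hjn h).not_gt h.not_gt

lemma Ldesc_subset_Ldesc_iff (hn : 1 ≤ n) (hx : x ∈ Wset n) (hy : y ∈ Wset n) :
    Ldesc n x ⊆ Ldesc n y ↔
      (∀ j, 1 ≤ j → j ≤ n → letter x j < 0 → letter y j < 0) ∧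
      ∀ j, 1 ≤ j → j + 1 ≤ n → letter x (j + 1) < letter x j → letter y (j + 1) < letter y j := by
  constructor
  · refine fun h => ⟨fun j hj hjn hxj => ?_, fun j hj hjn hxj => ?_⟩
    · exact (len_ttgen_mul_lt_iff hy hj hjn).1
        (h ⟨Or.inr ⟨j, ⟨hj, hjn⟩, rfl⟩, (len_ttgen_mul_lt_iff hx hj hjn).2 hxj⟩).2
    · exact (len_sgen_mul_lt_iff hy hj hjn).1
        (h ⟨Or.inl (sgen_mem_Sset hj hjn), (len_sgen_mul_lt_iff hx hj hjn).2 hxj⟩).2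
  · rintro ⟨ht, hs⟩ u ⟨hu, hux⟩
    refine ⟨hu, ?_⟩
    obtain (rfl | ⟨j, ⟨hj, hjn⟩, rfl⟩) | ⟨j, ⟨hj, hjn⟩, rfl⟩ := hu
    · rw [tgen_eq_ttgen, len_ttgen_mul_lt_iff hx le_rfl hn] at hux
      rw [tgen_eq_ttgen, len_ttgen_mul_lt_iff hy le_rfl hn]
      exact ht 1 le_rfl hn hux
    · rw [len_sgen_mul_lt_iff hx hj (by lia)] at hux
      rw [len_sgen_mul_lt_iff hy hj (by lia)]
      exact hs j hj (by lia) hux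
    · rw [len_ttgen_mul_lt_iff hx hj hjn] at hux
      rw [len_ttgen_mul_lt_iff hy hj hjn]
      exact ht j hj hjn hux

lemma not_Ldesc_subset_Ldesc_sgen_mul_iff (hx : x ∈ Wset n) (hi : 1 ≤ i) (hin : i + 1 ≤ n)
    (h : letter x i < letter x (i + 1)) :
    ¬ Ldesc n x ⊆ Ldesc n (sgen i * x) ↔
      (letter x i < 0 ∧ 0 < letter x (i + 1)) ∨
      (2 ≤ i ∧ letter x i < letter x (i - 1) ∧ letter x (i - 1) < letter x (i + 1)) ∨
      (i + 2 ≤ n ∧ letter x i < letter x (i + 2) ∧ letter x (i + 2) < letter x (i + 1)) := by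
  have hy : sgen i * x ∈ Wset n := mul_mem_Wset (sgen_mem_Wset hi hin) hx
  have hne : ∀ j, j ≠ i → j ≠ i + 1 → letter (sgen i * x) j = letter x j := fun j hji hji' => by
    rw [letter_sgen_mul hi, Equiv.swap_apply_of_ne_of_ne hji hji']
  have hleft := letter_sgen_mul_left hi x
  have hright := letter_sgen_mul_right hi x
  have h0 := letter_ne_zero hx (j := i + 1) (by lia)
  rw [Ldesc_subset_Ldesc_iff (by lia) hx hy, not_and_or]
  constructor
  · rintro (hj | hj)
    · push Not at hj
      obtain ⟨j, _, _, hxj, hyj⟩ := hj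
      grind
    · push Not at hj
      obtain ⟨j, hj, hjn, hxj, hyj⟩ := hj
      have := hyj.lt_of_ne ((letter_injective (sgen i * x)).ne j.succ_ne_self.symm)
      grind
  · rintro (hsign | ⟨hi2, hlt, hlt'⟩ | ⟨hin2, hlt, hlt'⟩)
    · exact Or.inl fun hj => (hj i hi (by lia) hsign.1).not_gt (by rw [hleft]; exact hsign.2)
    · refine Or.inr fun hj => ?_
      have := hj (i - 1) (by lia) (by lia)
      rw [Nat.sub_add_cancel hi, hleft, hne _ (by lia) (by lia)] at this
      exact (this hlt).not_gt hlt'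
    · refine Or.inr fun hj => ?_
      have := hj (i + 1) (by lia) (by lia)
      rw [hright, hne _ (by lia) (by lia)] at this
      exact (this hlt').not_gt hlt

lemma knuthStep_iff (hx : x ∈ Wset n) :
    knuthStep n x y ↔ ∃ i, 1 ≤ i ∧ i + 1 ≤ n ∧ y = sgen i * x ∧ letter x i < letter x (i + 1) ∧
      ((letter x i < 0 ∧ 0 < letter x (i + 1)) ∨
      (2 ≤ i ∧ letter x i < letter x (i - 1) ∧ letter x (i - 1) < letter x (i + 1)) ∨
      (i + 2 ≤ n ∧ letter x i < letter x (i + 2) ∧ letter x (i + 2) < letter x (i + 1))) := by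
  constructor
  · rintro ⟨i, ⟨hi, hin⟩, rfl, hlen, hdesc⟩
    have hin' : i + 1 ≤ n := by lia
    have hle := (len_sgen_mul_lt_iff hx hi hin').not.1 hlen.not_gt
    have hlt := (not_lt.1 hle).lt_of_ne ((letter_injective x).ne i.succ_ne_self.symm)
    exact ⟨i, hi, hin', rfl, hlt, (not_Ldesc_subset_Ldesc_sgen_mul_iff hx hi hin' hlt).1 hdesc⟩
  · rintro ⟨i, hi, hin, rfl, hlt, h⟩
    exact ⟨i, ⟨hi, by lia⟩, rfl, by rw [len_sgen_mul hx hi hin hlt]; exact Nat.lt_succ_self _,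
      (not_Ldesc_subset_Ldesc_sgen_mul_iff hx hi hin hlt).2 h⟩

/-! ### Knuth moves on signed words -/

/-- The one-line notation of `x⁻¹`. -/
def word (n : ℕ) (x : P) : List ℤ := (List.range' 1 n).map (letter x)

lemma word_nodup (n : ℕ) (x : P) : (word n x).Nodup :=
  (List.nodup_range' (s := 1) (n := n)).map (letter_injective x)

lemma zero_notMem_word (hx : x ∈ Wset n) : 0 ∉ word n x := by
  rw [word, List.mem_map]
  rintro ⟨j, hj, h0⟩
  exact letter_ne_zero hx (List.mem_range'_1.1 hj).1 h0

lemma word_injOn (n : ℕ) : Set.InjOn (word n) (Wset n) := fun _ hx _ hy h =>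
  eq_of_letter_eq hx hy fun j hj hjn => List.map_inj_left.1 h j (List.mem_range'_1.2 (by lia))

lemma word_eq_append_cons_cons (k m : ℕ) (x : P) :
    word (k + (m + 2)) x = word k x ++
      letter x (k + 1) :: letter x (k + 2) :: (List.range' (k + 3) m).map (letter x) := by
  rw [word, word, ← List.range'_append_1, List.map_append, add_comm 1 k, List.range'_succ,
    List.range'_succ, List.map_cons, List.map_cons]

lemma word_sgen_mul (k m : ℕ) (x : P) :
    word (k + (m + 2)) (sgen (k + 1) * x) = word k x ++
      letter x (k + 2) :: letter x (k + 1) :: (List.range' (k + 3) m).map (letter x) := by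
  have hne : ∀ j, j ≠ k + 1 → j ≠ k + 2 → letter (sgen (k + 1) * x) j = letter x j :=
    fun j h h' => by rw [letter_sgen_mul (by lia), Equiv.swap_apply_of_ne_of_ne h h']
  rw [word_eq_append_cons_cons, letter_sgen_mul_left (by lia), letter_sgen_mul_right (by lia),
    word, word, List.map_congr_left fun j hj => hne j _ _,
    List.map_congr_left fun j hj => hne j _ _]
  all_goals grind

lemma mem_getLast?_word {c : ℤ} (k : ℕ) (x : P) :
    c ∈ (word k x).getLast? ↔ 1 ≤ k ∧ c = letter x k := by
  cases k <;> simp [word, List.range'_1_concat, add_comm, eq_comm]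

lemma mem_head?_map_range' {c : ℤ} (k m : ℕ) (x : P) :
    c ∈ ((List.range' k m).map (letter x)).head? ↔ 1 ≤ m ∧ c = letter x k := by
  cases m <;> simp [List.range'_succ, eq_comm]

/-- An elementary Knuth move on a word in signed letters: adjacent letters `a < b` are exchanged,
which is allowed if they have opposite signs or if a letter next to them lies between them. -/
inductive SignedPlacticStep : List ℤ → List ℤ → Prop
  | of_neg_of_pos (p s : List ℤ) {a b : ℤ} (ha : a < 0) (hb : 0 < b) :
    SignedPlacticStep (p ++ a :: b :: s) (p ++ b :: a :: s)
  | of_mem_between (p s : List ℤ) {a b c : ℤ} (hc : c ∈ p.getLast? ∨ c ∈ s.head?)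
      (hac : a < c) (hcb : c < b) :
    SignedPlacticStep (p ++ a :: b :: s) (p ++ b :: a :: s)

lemma signedPlacticStep_of_knuthStep (hx : x ∈ Wset n) (h : knuthStep n x y) :
    SignedPlacticStep (word n x) (word n y) := by
  obtain ⟨i, hi, hin, rfl, -, h⟩ := (knuthStep_iff hx).1 h
  obtain ⟨k, rfl⟩ := Nat.exists_eq_add_of_le' hi
  obtain ⟨m, rfl⟩ : ∃ m, n = k + (m + 2) := ⟨n - (k + 2), by lia⟩
  rw [word_sgen_mul, word_eq_append_cons_cons]
  obtain h | ⟨hk, h, h'⟩ | ⟨hm, h, h'⟩ := h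
  · exact .of_neg_of_pos _ _ h.1 h.2
  · exact .of_mem_between _ _ (.inl ((mem_getLast?_word _ _).2 ⟨by lia, rfl⟩)) h h'
  · exact .of_mem_between _ _ (.inr ((mem_head?_map_range' _ _ _).2 ⟨by lia, rfl⟩)) h h'

lemma exists_of_word_eq_append_cons_cons {p s : List ℤ} {a b : ℤ}
    (h : word n x = p ++ a :: b :: s) : ∃ k m, n = k + (m + 2) ∧ p = word k x ∧
      a = letter x (k + 1) ∧ b = letter x (k + 2) ∧ s = (List.range' (k + 3) m).map (letter x) := by
  obtain rfl : n = p.length + (s.length + 2) := by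
    simpa [word, add_assoc] using congrArg List.length h
  rw [word_eq_append_cons_cons] at h
  obtain ⟨hp, hs⟩ := List.append_inj h (by simp [word])
  obtain ⟨ha, hb, hs⟩ := by simpa only [List.cons.injEq] using hs
  exact ⟨_, _, rfl, hp.symm, ha.symm, hb.symm, hs.symm⟩

lemma exists_word_eq_swap (hx : x ∈ Wset n) {p s : List ℤ} {a b : ℤ}
    (h : word n x = p ++ a :: b :: s) : ∃ y ∈ Wset n, word n y = p ++ b :: a :: s := by
  obtain ⟨k, m, rfl, rfl, rfl, rfl, rfl⟩ := exists_of_word_eq_append_cons_cons h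
  exact ⟨_, mul_mem_Wset (sgen_mem_Wset (by lia) (by lia)) hx, word_sgen_mul k m x⟩

lemma exists_word_eq_of_signedPlacticStep (hx : x ∈ Wset n) {L : List ℤ}
    (h : Relation.SymmGen SignedPlacticStep (word n x) L) : ∃ y ∈ Wset n, word n y = L := by
  generalize hw : word n x = w at h
  obtain (⟨p, s, -, -⟩ | ⟨p, s, -, -, -⟩) | (⟨p, s, -, -⟩ | ⟨p, s, -, -, -⟩) := h
  all_goals exact exists_word_eq_swap hx hw

lemma knuthStep_of_signedPlacticStep (hx : x ∈ Wset n) (hy : y ∈ Wset n)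
    (h : SignedPlacticStep (word n x) (word n y)) : knuthStep n x y := by
  generalize hw : word n x = w at h
  generalize hw' : word n y = w' at h
  have heq : ∀ {k m}, n = k + (m + 2) → word n y = word k x ++
      letter x (k + 2) :: letter x (k + 1) :: (List.range' (k + 3) m).map (letter x) →
      y = sgen (k + 1) * x := by
    rintro k m rfl h
    exact word_injOn _ hy (mul_mem_Wset (sgen_mem_Wset (by lia) (by lia)) hx)
      (h.trans (word_sgen_mul k m x).symm)
  rw [knuthStep_iff hx]
  obtain ⟨p, s, ha, hb⟩ | ⟨p, s, hc, hac, hcb⟩ := h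
  · obtain ⟨k, m, hn, rfl, rfl, rfl, rfl⟩ := exists_of_word_eq_append_cons_cons hw
    exact ⟨k + 1, by lia, by lia, heq hn hw', ha.trans hb, .inl ⟨ha, hb⟩⟩
  · obtain ⟨k, m, hn, rfl, rfl, rfl, rfl⟩ := exists_of_word_eq_append_cons_cons hw
    refine ⟨k + 1, by lia, by lia, heq hn hw', hac.trans hcb, .inr ?_⟩
    rw [mem_getLast?_word, mem_head?_map_range'] at hc
    obtain ⟨hk, rfl⟩ | ⟨hm, rfl⟩ := hc
    · exact .inl ⟨by lia, hac, hcb⟩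
    · exact .inr ⟨by lia, hac, hcb⟩

lemma mem_Wset_of_knuthStep (hx : x ∈ Wset n)
    (h : knuthStep n x y ∨ knuthStep n y x) : y ∈ Wset n := by
  obtain ⟨i, ⟨hi, hin⟩, rfl, -⟩ | ⟨i, ⟨hi, hin⟩, rfl, -⟩ := h
  · exact mul_mem_Wset (sgen_mem_Wset hi (by lia)) hx
  · rw [← sgen_mul_cancel_left hi y]
    exact mul_mem_Wset (sgen_mem_Wset hi (by lia)) hx

/-- The equivalence relation on words in signed letters generated by the Knuth moves. -/
def SignedPlacticEquiv : List ℤ → List ℤ → Prop := Relation.EqvGen SignedPlacticStep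

theorem knuthRel_iff_signedPlacticEquiv (hx : x ∈ Wset n) (hy : y ∈ Wset n) :
    knuthRel n x y ↔ SignedPlacticEquiv (word n x) (word n y) := by
  rw [SignedPlacticEquiv, ← Relation.EqvGen.reflTransGen_symmGen]
  constructor
  · intro h
    suffices y ∈ Wset n ∧
      Relation.ReflTransGen (Relation.SymmGen SignedPlacticStep) (word n x) (word n y) from this.2
    clear hy
    induction h with
    | refl => exact ⟨hx, .refl⟩
    | tail _ hstep ih =>
      obtain ⟨hy, ih⟩ := ih
      have hz := mem_Wset_of_knuthStep hy hstep
      exact ⟨hz, ih.tail (hstep.imp (signedPlacticStep_of_knuthStep hy)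
        (signedPlacticStep_of_knuthStep hz))⟩
  · intro h
    obtain ⟨z, hz, hzy, hrel⟩ : ∃ z ∈ Wset n, word n z = word n y ∧ knuthRel n x z := by
      generalize word n y = L at h
      induction h with
      | refl => exact ⟨x, hx, rfl, .refl⟩
      | tail _ hstep ih =>
        obtain ⟨z, hz, rfl, hrel⟩ := ih
        obtain ⟨w, hw, rfl⟩ := exists_word_eq_of_signedPlacticStep hz hstep
        exact ⟨w, hw, rfl, hrel.tail (hstep.imp (knuthStep_of_signedPlacticStep hz hw)
          (knuthStep_of_signedPlacticStep hw hz))⟩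
    rwa [← word_injOn n hz hy hzy]

end SignedPermutations

namespace SignedPlacticEquiv

variable {L M N : List ℤ}

protected lemma refl (L : List ℤ) : SignedPlacticEquiv L L := Relation.EqvGen.refl L

protected lemma symm (h : SignedPlacticEquiv L M) : SignedPlacticEquiv M L :=
  Relation.EqvGen.symm _ _ h

protected lemma trans (h : SignedPlacticEquiv L M) (h' : SignedPlacticEquiv M N) :
    SignedPlacticEquiv L N := Relation.EqvGen.trans _ _ _ h h'

lemma equivalence : Equivalence SignedPlacticEquiv := Relation.EqvGen.is_equivalence _

lemma of_step (h : SignedPlacticStep L M) : SignedPlacticEquiv L M := Relation.EqvGen.rel _ _ h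

lemma append_left (h : SignedPlacticEquiv L M) (p : List ℤ) :
    SignedPlacticEquiv (p ++ L) (p ++ M) := by
  refine eqvGen_le_comap equivalence (p ++ ·) (fun a b hab => of_step ?_) h
  obtain ⟨q, s, ha, hb⟩ | ⟨q, s, hc, hac, hcb⟩ := hab
  · simpa using SignedPlacticStep.of_neg_of_pos (p ++ q) s ha hb
  · simpa using SignedPlacticStep.of_mem_between (p ++ q) s
      (hc.imp_left List.mem_getLast?_append_of_mem_getLast?) hac hcb

lemma append_right (h : SignedPlacticEquiv L M) (s : List ℤ) :
    SignedPlacticEquiv (L ++ s) (M ++ s) := by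
  refine eqvGen_le_comap equivalence (· ++ s) (fun a b hab => of_step ?_) h
  obtain ⟨p, t, ha, hb⟩ | ⟨p, t, hc, hac, hcb⟩ := hab
  · simpa using SignedPlacticStep.of_neg_of_pos p (t ++ s) ha hb
  · simpa using SignedPlacticStep.of_mem_between p (t ++ s)
      (hc.imp_right List.mem_head?_append_of_mem_head?) hac hcb

lemma map_neg (h : SignedPlacticEquiv L M) :
    SignedPlacticEquiv (L.map Neg.neg) (M.map Neg.neg) := by
  refine eqvGen_le_comap equivalence (List.map Neg.neg) (fun a b hab => (of_step ?_).symm) h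
  obtain ⟨p, s, ha, hb⟩ | ⟨p, s, hc, hac, hcb⟩ := hab <;>
    simp only [List.map_append, List.map_cons]
  · exact .of_neg_of_pos _ _ (neg_neg_of_pos hb) (neg_pos_of_neg ha)
  · refine .of_mem_between _ _ (hc.imp (fun h => ?_) fun h => ?_) (neg_lt_neg hcb) (neg_lt_neg hac)
    · rw [List.getLast?_map]
      exact Option.mem_map_of_mem _ h
    · rw [List.head?_map]
      exact Option.mem_map_of_mem _ h

end SignedPlacticEquiv

/-- The subword of the positive letters of a word in signed letters, as a word in `ℕ`. -/
def positiveLetters (L : List ℤ) : List ℕ := (L.filter (0 < ·)).map Int.toNat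

section PositiveLetters

variable {L M : List ℤ} {a : ℤ}

lemma positiveLetters_append (L M : List ℤ) :
    positiveLetters (L ++ M) = positiveLetters L ++ positiveLetters M := by
  simp [positiveLetters]

lemma positiveLetters_cons_of_pos (ha : 0 < a) (L : List ℤ) :
    positiveLetters (a :: L) = a.toNat :: positiveLetters L := by
  simp [positiveLetters, ha]

lemma positiveLetters_cons_of_nonpos (ha : a ≤ 0) (L : List ℤ) :
    positiveLetters (a :: L) = positiveLetters L := by
  simp [positiveLetters, ha]

lemma pos_of_mem_positiveLetters {k : ℕ} (hk : k ∈ positiveLetters L) : 0 < k := by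
  simp only [positiveLetters, List.mem_map, List.mem_filter, decide_eq_true_eq] at hk
  lia

lemma nodup_positiveLetters (hL : L.Nodup) : (positiveLetters L).Nodup := by
  refine (hL.filter _).map_on fun a ha b hb hab => ?_
  simp only [List.mem_filter, decide_eq_true_eq] at ha hb
  lia

lemma placticEquiv_positiveLetters_of_mem_between {a b c : ℤ} {p s : List ℤ}
    (hc : c ∈ p.getLast? ∨ c ∈ s.head?) (hac : a < c) (hcb : c < b) (ha : 0 < a) :
    PlacticEquiv (positiveLetters (p ++ a :: b :: s)) (positiveLetters (p ++ b :: a :: s)) := by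
  have hc0 : 0 < c := ha.trans hac
  have hb : 0 < b := hc0.trans hcb
  have hac' : a.toNat < c.toNat := by lia
  have hcb' : c.toNat < b.toNat := by lia
  obtain hc | hc := hc
  · obtain ⟨p, rfl⟩ := List.getLast?_eq_some_iff.1 hc
    simpa [positiveLetters_append, positiveLetters_cons_of_pos, ha, hb, hc0] using
      PlacticEquiv.of_step (.knuth₂ (positiveLetters p) (positiveLetters s) hac' hcb'.le)
  · obtain ⟨s, rfl⟩ := List.head?_eq_some_iff.1 hc
    simpa [positiveLetters_append, positiveLetters_cons_of_pos, ha, hb, hc0] using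
      PlacticEquiv.of_step (.knuth₁ (positiveLetters p) (positiveLetters s) hac'.le hcb')

lemma placticEquiv_positiveLetters (h : SignedPlacticEquiv L M) :
    PlacticEquiv (positiveLetters L) (positiveLetters M) := by
  have swap_of_neg {a : ℤ} (b : ℤ) (p s : List ℤ) (ha : a ≤ 0) :
      positiveLetters (p ++ a :: b :: s) = positiveLetters (p ++ b :: a :: s) := by
    obtain hb | hb := le_or_gt b 0 <;>
      simp only [positiveLetters_append, positiveLetters_cons_of_nonpos, ha, hb,
        positiveLetters_cons_of_pos]
  refine eqvGen_le_comap PlacticEquiv.equivalence positiveLetters (fun L M hLM => ?_) h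
  obtain @⟨p, s, a, b, ha, hb⟩ | @⟨p, s, a, b, c, hc, hac, hcb⟩ := hLM
  · exact swap_of_neg b p s ha.le ▸ .refl _
  obtain ha | ha := le_or_gt a 0
  · exact swap_of_neg b p s ha ▸ .refl _
  · exact placticEquiv_positiveLetters_of_mem_between hc hac hcb ha

lemma SignedPlacticEquiv.append_singleton_of_neg (ha : a < 0) (hL : ∀ b ∈ L, 0 < b) :
    SignedPlacticEquiv (a :: L) (L ++ [a]) := by
  induction L with
  | nil => exact .refl _
  | cons b L ih =>
    obtain ⟨hb, hL⟩ := List.forall_mem_cons.1 hL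
    exact (of_step (.of_neg_of_pos [] L ha hb)).trans ((ih hL).append_left [b])

/-- Letters of opposite signs commute, so the negative letters can be moved to the end. -/
lemma signedPlacticEquiv_positiveLetters_append (hL : 0 ∉ L) :
    SignedPlacticEquiv L ((positiveLetters L).map Nat.cast ++
      ((positiveLetters (L.map Neg.neg)).map Nat.cast).map Neg.neg) := by
  induction L with
  | nil => exact .refl _
  | cons a L ih =>
    rw [List.mem_cons, not_or] at hL
    have ih := (ih hL.2).append_left [a]
    rw [List.map_cons]
    obtain ha | ha := Ne.lt_or_gt hL.1
    · rw [positiveLetters_cons_of_pos ha, positiveLetters_cons_of_nonpos (by lia), List.map_cons,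
        Int.toNat_of_nonneg ha.le]
      exact ih
    · rw [positiveLetters_cons_of_nonpos ha.le, positiveLetters_cons_of_pos (by lia), List.map_cons,
        List.map_cons, Int.toNat_of_nonneg (by lia), neg_neg]
      refine ih.trans ?_
      have := SignedPlacticEquiv.append_singleton_of_neg ha
        (L := (positiveLetters L).map Nat.cast) (by
          simpa using fun k => pos_of_mem_positiveLetters (L := L) (k := k))
      simpa using this.append_right _

lemma PlacticEquiv.signedPlacticEquiv_map_cast {u v : List ℕ} (h : PlacticEquiv u v)
    (hu : u.Nodup) : SignedPlacticEquiv (u.map Nat.cast) (v.map Nat.cast) := by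
  induction h with
  | refl u => exact .refl _
  | symm u v h ih => exact (ih ((PlacticEquiv.perm h).nodup_iff.2 hu)).symm
  | trans u v w h _ ih ih' => exact (ih hu).trans (ih' ((PlacticEquiv.perm h).nodup_iff.1 hu))
  | rel u v h =>
    obtain @⟨x, y, z, p, s, hxy, hyz⟩ | @⟨x, y, z, p, s, hxy, hyz⟩ := h
    · have hne : x ≠ y := by grind
      simp only [List.map_append, List.map_cons]
      refine .of_step (.of_mem_between _ _ (.inr (List.head?_cons ..)) ?_ ?_) <;> lia
    · have hne : y ≠ z := by grind
      have h := SignedPlacticStep.of_mem_between (a := x) (b := z) (c := y)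
        (p.map Nat.cast ++ [(y : ℤ)]) (s.map Nat.cast) (.inl (by simp)) (by lia) (by lia)
      simpa using SignedPlacticEquiv.of_step h

theorem signedPlacticEquiv_iff (hL : L.Nodup) (hL0 : 0 ∉ L) (hM0 : 0 ∉ M) :
    SignedPlacticEquiv L M ↔ PlacticEquiv (positiveLetters L) (positiveLetters M) ∧
      PlacticEquiv (positiveLetters (L.map Neg.neg)) (positiveLetters (M.map Neg.neg)) := by
  refine ⟨fun h => ⟨placticEquiv_positiveLetters h, placticEquiv_positiveLetters h.map_neg⟩, ?_⟩
  rintro ⟨hpos, hneg⟩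
  have hpos := hpos.signedPlacticEquiv_map_cast (nodup_positiveLetters hL)
  have hneg := (hneg.signedPlacticEquiv_map_cast
    (nodup_positiveLetters (hL.map neg_injective))).map_neg
  exact (signedPlacticEquiv_positiveLetters_append hL0).trans <|
    ((hpos.append_right _).trans (hneg.append_left _)).trans
      (signedPlacticEquiv_positiveLetters_append hM0).symm

end PositiveLetters

/-! ### The bitableaux of a signed permutation -/

section Bitableau

variable {n : ℕ} {x : P}

/-- The two-line array of the positive values of `f` on `l`, each one labelled by its argument. -/
def positiveBiword (f : ℕ → ℤ) (l : List ℕ) : List (ℕ × ℕ) :=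
  (l.filter (0 < f ·)).map fun i => (i, (f i).toNat)

lemma positiveBiword_append_singleton_of_pos {f : ℕ → ℤ} {i : ℕ} (hi : 0 < f i) (l : List ℕ) :
    positiveBiword f (l ++ [i]) = positiveBiword f l ++ [(i, (f i).toNat)] := by
  simp [positiveBiword, hi]

lemma positiveBiword_append_singleton_of_nonpos {f : ℕ → ℤ} {i : ℕ} (hi : f i ≤ 0)
    (l : List ℕ) : positiveBiword f (l ++ [i]) = positiveBiword f l := by
  simp [positiveBiword, hi]

lemma mem_positiveBiword {f : ℕ → ℤ} {l : List ℕ} {i j : ℕ} :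
    (i, j) ∈ positiveBiword f l ↔ i ∈ l ∧ 0 < j ∧ f i = j := by
  simp only [positiveBiword, List.mem_map, List.mem_filter, decide_eq_true_eq, Prod.mk.injEq]
  constructor
  · rintro ⟨i, ⟨hi, hpos⟩, rfl, rfl⟩
    exact ⟨hi, by lia, by lia⟩
  · rintro ⟨hi, hj, hij⟩
    exact ⟨i, ⟨hi, by lia⟩, rfl, by lia⟩

lemma pairwise_positiveBiword (f : ℕ → ℤ) {l : List ℕ} (hl : l.Pairwise (· < ·)) :
    (positiveBiword f l).Pairwise (fun p q => p.1 < q.1) :=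
  List.pairwise_map.mpr (hl.filter _)

lemma positiveBiword_map_snd (f : ℕ → ℤ) (l : List ℕ) :
    (positiveBiword f l).map Prod.snd = positiveLetters (l.map f) := by
  simp [positiveBiword, positiveLetters, List.filter_map, Function.comp_def]

lemma rs_positiveBiword_range'_snd {f g : ℕ → ℤ} (hfg : ∀ i j : ℕ, f i = j ↔ g j = i)
    (hf_le : ∀ i ≤ n, f i ≤ n) (hg_le : ∀ j ≤ n, g j ≤ n) :
    (rs (positiveBiword f (List.range' 1 n))).2 =
      insWord [] (positiveLetters ((List.range' 1 n).map g)) := by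
  set l := List.range' 1 n with hl_def
  have hl : l.Pairwise (· < ·) := List.pairwise_lt_range'
  have hf := pairwise_positiveBiword f hl
  have hg : ((positiveBiword g l).map Prod.swap).Pairwise (fun p q => p.2 < q.2) :=
    List.pairwise_map.mpr (pairwise_positiveBiword g hl)
  have hperm : (positiveBiword f l).Perm ((positiveBiword g l).map Prod.swap) := by
    rw [List.perm_ext_iff_of_nodup (hf.imp fun h => by grind) (hg.imp fun h => by grind)]
    rintro ⟨i, j⟩
    rw [← Prod.swap_prod_mk (a := j) (b := i), List.mem_map_of_injective Prod.swap_injective,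
      Prod.swap_prod_mk, mem_positiveBiword, mem_positiveBiword, hl_def, List.mem_range'_1,
      List.mem_range'_1, hfg]
    have := hf_le i
    have := hg_le j
    have := hfg i j
    grind
  rw [rs_snd hf hg hperm, List.map_map, ← positiveBiword_map_snd]
  rfl

lemma foldl_RSstep_eq {l : List ℕ} (hl : ∀ i ∈ l, x i ≠ 0) :
    l.foldl (RSstep x) (([], []), ([], [])) =
      (((rs (positiveBiword (x ·) l)).1, (rs (positiveBiword (-x ·) l)).1),
        ((rs (positiveBiword (x ·) l)).2, (rs (positiveBiword (-x ·) l)).2)) := by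
  induction l using List.reverseRecOn with
  | nil => rfl
  | append_singleton l i ih =>
    rw [List.forall_mem_append, List.forall_mem_singleton] at hl
    rw [List.foldl_append, List.foldl_cons, List.foldl_nil, ih hl.1]
    obtain hi | hi := hl.2.lt_or_gt
    · rw [positiveBiword_append_singleton_of_nonpos hi.le,
        positiveBiword_append_singleton_of_pos (by lia), rs_append_singleton, RSstep,
        if_neg (by lia), rsStep, show (x i).natAbs = (-x i).toNat by lia]
    · rw [positiveBiword_append_singleton_of_pos hi,
        positiveBiword_append_singleton_of_nonpos (by lia), rs_append_singleton, RSstep,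
        if_pos hi, rsStep, show (x i).natAbs = (x i).toNat by lia]

lemma Btab_eq (hx : x ∈ Wset n) :
    Btab n x = (insWord [] (positiveLetters (word n x)),
      insWord [] (positiveLetters ((word n x).map Neg.neg))) := by
  have abs_apply_le : ∀ i : ℕ, i ≤ n → |x i| ≤ n := fun i hi =>
    abs_Wset_apply_le hx (by rwa [Nat.abs_cast, Nat.cast_le])
  have abs_letter_le : ∀ j : ℕ, j ≤ n → |letter x j| ≤ n := fun j hj =>
    abs_Wset_apply_le (inv_mem_Wset hx) (by rwa [Nat.abs_cast, Nat.cast_le])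
  have hpos := rs_positiveBiword_range'_snd (f := (x ·)) (g := letter x)
    (fun i j => eq_comm.trans Equiv.Perm.inv_eq_iff_eq.symm)
    (fun i hi => (le_abs_self _).trans (abs_apply_le i hi))
    (fun j hj => (le_abs_self _).trans (abs_letter_le j hj))
  have hneg := rs_positiveBiword_range'_snd (f := (-x ·)) (g := (-letter x ·))
    (fun i j => by
      rw [letter, neg_eq_iff_eq_neg, neg_eq_iff_eq_neg, Equiv.Perm.inv_eq_iff_eq, hx.1,
        eq_neg_iff_add_eq_zero, eq_neg_iff_add_eq_zero, add_comm])
    (fun i hi => (neg_le_abs _).trans (abs_apply_le i hi))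
    (fun j hj => (neg_le_abs _).trans (abs_letter_le j hj))
  have hrange : (List.range n).map (· + 1) = List.range' 1 n := by
    simp only [List.range'_eq_map_range, add_comm 1]
  simp only [Btab, RSfull, hrange]
  rw [foldl_RSstep_eq fun i hi => Wset_apply_ne_zero hx (by grind), hpos, hneg, word, List.map_map]
  rfl

end Bitableau

/-- For `x, y ∈ W_n`: `B_n(x) = B_n(y)` iff `x ↔_L y`. -/
theorem RS_cell_iff_knuth (n : ℕ) (hn : 1 ≤ n) (x y : P)
    (hx : x ∈ Wset n) (hy : y ∈ Wset n) :
    Btab n x = Btab n y ↔ knuthRel n x y := by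
  have hx0 := zero_notMem_word hx
  have hy0 := zero_notMem_word hy
  rw [Btab_eq hx, Btab_eq hy, Prod.mk.injEq, insWord_eq_iff_placticEquiv,
    insWord_eq_iff_placticEquiv, ← signedPlacticEquiv_iff (word_nodup n x) hx0 hy0,
    ← knuthRel_iff_signedPlacticEquiv hx hy]
end

section
/- Let 1 ≤ l ≤ n−1, let a ∈ X_n^{(l)} and let s ∈ Σ_n = {s_1,…,s_{n−1}}. Then a^{−1} s a ≠ s_l. -/
open scoped Classical

/-!
A strong exchange condition holds for words in `S_n`: if the product `w` of a word satisfies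
`w y < w x` for some `x < y`, then some letter reverses the order of the pair to which the letters
on its right send `(x, y)`, and deleting this letter multiplies `w` on the right by the
reflection exchanging `x` and `y`.

Consequently an element `a` of `X_n` is increasing on `{1, …, n}`, and every letter `t` of a
reduced word creates a new negative value, so that `a ∈ X_n^{(l)}` has exactly `l` of them.
Hence `a l < 0 < a (l + 1)`. But `s a = a s_l` would give `s (a (l + 1)) = a l`, whereas
`s ∈ Σ_n` preserves signs.
-/

section Generators

lemma sgen_apply {k : ℕ} (hk : 1 ≤ k) (x : ℤ) : sgen k x =
    if x = k then (k : ℤ) + 1 else if x = (k : ℤ) + 1 then (k : ℤ) else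
    if x = -(k : ℤ) then -((k : ℤ) + 1) else if x = -((k : ℤ) + 1) then -(k : ℤ) else x := by
  simp only [sgen, Equiv.Perm.mul_apply, Equiv.swap_apply_def]
  split_ifs <;> omega

lemma tgen_apply (x : ℤ) : tgen x = if x = 1 then -1 else if x = -1 then 1 else x := by
  simp only [tgen, Equiv.swap_apply_def]

lemma sgen_neg_iff {k : ℕ} (hk : 1 ≤ k) {x : ℤ} : sgen k x < 0 ↔ x < 0 := by
  rw [sgen_apply hk]
  split_ifs <;> omega

lemma sgen_pos_iff {k : ℕ} (hk : 1 ≤ k) {x : ℤ} : 0 < sgen k x ↔ 0 < x := by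
  rw [sgen_apply hk]
  split_ifs <;> omega

lemma sgen_ne_tgen {k : ℕ} (hk : 1 ≤ k) : sgen k ≠ tgen := by
  intro h
  have h_neg : sgen k 1 < 0 := by rw [h, tgen_apply, if_pos rfl]; decide
  exact absurd ((sgen_neg_iff hk).1 h_neg) (by decide)

lemma mul_self_of_mem_Sset {n : ℕ} {g : P} (hg : g ∈ Sset n) : g * g = 1 := by
  obtain rfl | ⟨k, ⟨hk, -⟩, rfl⟩ := hg
  · exact Equiv.swap_mul_self _ _
  · ext x
    simp only [Equiv.Perm.mul_apply, sgen_apply hk, Equiv.Perm.one_apply]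
    split_ifs <;> omega

lemma odd_of_mem_Sset {n : ℕ} {g : P} (hg : g ∈ Sset n) : Function.Odd g := by
  intro x
  obtain rfl | ⟨k, ⟨hk, -⟩, rfl⟩ := hg
  · simp only [tgen_apply]
    split_ifs <;> omega
  · simp only [sgen_apply hk]
    split_ifs <;> omega

lemma odd_list_prod {L : List P} (hL : ∀ g ∈ L, Function.Odd g) : Function.Odd L.prod := by
  induction L with
  | nil => exact fun _ => rfl
  | cons g L ih =>
    rw [List.forall_mem_cons] at hL
    rw [List.prod_cons]
    exact hL.1.comp_odd (ih hL.2)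

lemma odd_prod_of_word {n : ℕ} {L : List P} (hL : ∀ g ∈ L, g ∈ Sset n) : Function.Odd L.prod :=
  odd_list_prod fun g hg => odd_of_mem_Sset (hL g hg)

lemma apply_ne_zero_iff {w : P} (hw : Function.Odd w) {x : ℤ} : w x ≠ 0 ↔ x ≠ 0 :=
  w.injective.ne_iff' hw.map_zero

end Generators

section Exchange

/-- The reflection `(x, y)(-x, -y)` of a hyperoctahedral group, understood as `(x, -x)` if
`y = -x`. It is a reflection only for nonzero `x ≠ y`. -/
def signedSwap (x y : ℤ) : P :=
  if y = -x then Equiv.swap x y else Equiv.swap x y * Equiv.swap (-x) (-y)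

lemma tgen_eq_signedSwap : tgen = signedSwap (-1) 1 := by
  rw [signedSwap, if_pos (neg_neg 1).symm, tgen, Equiv.swap_comm]

lemma sgen_eq_signedSwap (k : ℕ) : sgen k = signedSwap k (k + 1) := by
  rw [signedSwap, if_neg (by omega), sgen]

lemma mul_signedSwap {w : P} (hw : Function.Odd w) (x y : ℤ) :
    w * signedSwap x y = signedSwap (w x) (w y) * w := by
  have h_iff : w y = -w x ↔ y = -x := by rw [← hw, w.injective.eq_iff]
  simp only [signedSwap, h_iff]
  split_ifs
  · exact Equiv.mul_swap_eq_swap_mul w x y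
  · rw [← mul_assoc, Equiv.mul_swap_eq_swap_mul w, mul_assoc, Equiv.mul_swap_eq_swap_mul w, hw, hw,
      mul_assoc]

lemma signedSwap_eq_sgen_of_neg {k : ℕ} (hk : 1 ≤ k) :
    signedSwap (-((k : ℤ) + 1)) (-(k : ℤ)) = sgen k := by
  rw [signedSwap, if_neg (by omega)]
  ext x
  simp only [sgen_apply hk, Equiv.Perm.mul_apply, Equiv.swap_apply_def]
  split_ifs <;> omega

variable {n : ℕ} {x y : ℤ}

lemma signedSwap_eq_of_apply_lt {g : P} (hg : g ∈ Sset n) (hx : x ≠ 0) (hy : y ≠ 0)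
    (hxy : x < y) (hlt : g y < g x) : signedSwap x y = g := by
  obtain rfl | ⟨k, ⟨hk, -⟩, rfl⟩ := hg
  · obtain ⟨rfl, rfl⟩ : x = -1 ∧ y = 1 := by
      simp only [tgen_apply] at hlt
      split_ifs at hlt <;> omega
    exact tgen_eq_signedSwap.symm
  · obtain ⟨rfl, rfl⟩ | ⟨rfl, rfl⟩ :
        (x = k ∧ y = (k : ℤ) + 1) ∨ (x = -((k : ℤ) + 1) ∧ y = -(k : ℤ)) := by
      simp only [sgen_apply hk] at hlt
      split_ifs at hlt <;> omega
    · exact (sgen_eq_signedSwap k).symm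
    · exact signedSwap_eq_sgen_of_neg hk

theorem exists_prod_eraseIdx_eq_prod_mul_signedSwap {L : List P}
    (hL : ∀ g ∈ L, g ∈ Sset n) (hx : x ≠ 0) (hy : y ≠ 0) (hxy : x < y)
    (hlt : L.prod y < L.prod x) :
    ∃ i < L.length, (L.eraseIdx i).prod = L.prod * signedSwap x y := by
  induction L with
  | nil => exact absurd hlt hxy.asymm
  | cons g L ih =>
    obtain ⟨hg, hL⟩ := List.forall_mem_cons.1 hL
    have hodd : Function.Odd L.prod := odd_prod_of_word hL
    obtain h | h := lt_or_gt_of_ne (L.prod.injective.ne hxy.ne)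
    · have hg_eq : signedSwap (L.prod x) (L.prod y) = g :=
        signedSwap_eq_of_apply_lt hg ((apply_ne_zero_iff hodd).2 hx)
          ((apply_ne_zero_iff hodd).2 hy) h (by simpa using hlt)
      refine ⟨0, by simp, ?_⟩
      rw [List.eraseIdx_cons_zero, List.prod_cons, mul_assoc, mul_signedSwap hodd, hg_eq,
        ← mul_assoc, mul_self_of_mem_Sset hg, one_mul]
    · obtain ⟨i, hi, h_prod⟩ := ih hL h
      refine ⟨i + 1, by simpa using hi, ?_⟩
      rw [List.eraseIdx_cons_succ, List.prod_cons, List.prod_cons, h_prod, mul_assoc]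

end Exchange

section ReducedWords

/-- A reduced word: a list of elements of `S_n` which is a shortest expression of its product. -/
def IsReducedWord (n : ℕ) (L : List P) : Prop :=
  (∀ g ∈ L, g ∈ Sset n) ∧ L.length = len n L.prod

variable {n : ℕ} {L : List P}

lemma len_prod_le (hL : ∀ g ∈ L, g ∈ Sset n) : len n L.prod ≤ L.length :=
  Nat.sInf_le ⟨L, hL, rfl, rfl⟩

lemma exists_isReducedWord_prod_eq (hL : ∀ g ∈ L, g ∈ Sset n) :
    ∃ L', IsReducedWord n L' ∧ L'.prod = L.prod := by
  obtain ⟨L', hL', h_prod, h_len⟩ :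
      len n L.prod ∈ {k | ∃ l : List P, (∀ g ∈ l, g ∈ Sset n) ∧ l.prod = L.prod ∧ l.length = k} :=
    Nat.sInf_mem ⟨_, L, hL, rfl, rfl⟩
  exact ⟨L', ⟨hL', h_len.trans (by rw [h_prod])⟩, h_prod⟩

lemma exists_isReducedWord_of_tlen_pos {w : P} (hw : 0 < tlen n w) :
    ∃ L, IsReducedWord n L ∧ L.prod = w ∧ tcount L = tlen n w := by
  obtain ⟨L, hL, rfl, h_len, h_count⟩ := Nat.sInf_mem (Nat.nonempty_of_pos_sInf hw)
  exact ⟨L, ⟨hL, h_len⟩, rfl, h_count⟩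

lemma len_mul_signedSwap_lt (hL : ∀ g ∈ L, g ∈ Sset n) {x y : ℤ} (hx : x ≠ 0)
    (hy : y ≠ 0) (hxy : x < y) (hlt : L.prod y < L.prod x) :
    len n (L.prod * signedSwap x y) < len n L.prod := by
  obtain ⟨R, ⟨hR, hR_len⟩, hR_prod⟩ := exists_isReducedWord_prod_eq hL
  rw [← hR_prod] at hlt ⊢
  obtain ⟨i, hi, h_erase⟩ := exists_prod_eraseIdx_eq_prod_mul_signedSwap hR hx hy hxy hlt
  calc len n (R.prod * signedSwap x y)
      = len n (R.eraseIdx i).prod := by rw [h_erase]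
    _ ≤ (R.eraseIdx i).length := len_prod_le fun g hg => hR g (List.mem_of_mem_eraseIdx hg)
    _ < R.length := by rw [List.length_eraseIdx_of_lt hi]; omega
    _ = len n R.prod := hR_len

lemma IsReducedWord.of_append {M : List P} (h : IsReducedWord n (L ++ M)) :
    IsReducedWord n L := by
  obtain ⟨h_mem, h_len⟩ := h
  obtain ⟨hL, hM⟩ := List.forall_mem_append.1 h_mem
  obtain ⟨R, ⟨hR, hR_len⟩, hR_prod⟩ := exists_isReducedWord_prod_eq hL
  have h_le : len n (R ++ M).prod ≤ (R ++ M).length :=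
    len_prod_le (List.forall_mem_append.2 ⟨hR, hM⟩)
  rw [List.prod_append, hR_prod, ← List.prod_append, ← h_len, List.length_append,
    List.length_append, hR_len, hR_prod] at h_le
  exact ⟨hL, (Nat.le_of_add_le_add_right h_le).antisymm (len_prod_le hL)⟩

lemma IsReducedWord.prod_apply_one_pos (h : IsReducedWord n (L ++ [tgen])) :
    0 < L.prod 1 := by
  have hL : IsReducedWord n L := h.of_append
  have hodd : Function.Odd L.prod := odd_prod_of_word hL.1
  by_contra! h_nonpos
  have h_lt : L.prod 1 < L.prod (-1) := by
    have h_ne : L.prod 1 ≠ 0 := (apply_ne_zero_iff hodd).2 one_ne_zero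
    rw [hodd]
    omega
  have h_len : len n (L.prod * tgen) < len n L.prod :=
    tgen_eq_signedSwap ▸ len_mul_signedSwap_lt hL.1 (by decide) one_ne_zero (by decide) h_lt
  have h_len' : L.length + 1 = len n (L.prod * tgen) := by simpa using h.2
  have := hL.2
  omega

end ReducedWords

section NegativeValues

/-- The positive integers at which `w` takes a negative value. -/
def negPositions (w : P) : Set ℤ := {x | 0 < x ∧ w x < 0}

lemma encard_negPositions_mul_sgen {k : ℕ} (hk : 1 ≤ k) (w : P) :
    (negPositions (w * sgen k)).encard = (negPositions w).encard := by
  have h_preimage : negPositions (w * sgen k) = sgen k ⁻¹' negPositions w := by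
    ext x
    exact and_congr_left' (sgen_pos_iff hk).symm
  rw [h_preimage, ← Equiv.image_symm_eq_preimage, (sgen k).symm.injective.encard_image]

lemma encard_negPositions_mul_tgen {w : P} (hw : Function.Odd w) (h_one : 0 < w 1) :
    (negPositions (w * tgen)).encard = (negPositions w).encard + 1 := by
  have h_not_mem : (1 : ℤ) ∉ negPositions w := fun h => h.2.asymm h_one
  have h_insert : negPositions (w * tgen) = insert 1 (negPositions w) := by
    ext x
    obtain rfl | hx := eq_or_ne x 1
    · simp [negPositions, tgen_apply, hw 1, h_one]
    · have h_fix : 0 < x → tgen x = x := fun hx_pos => by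
        rw [tgen_apply, if_neg hx, if_neg (by omega)]
      simp +contextual [negPositions, hx, h_fix]
  rw [h_insert, Set.encard_insert_of_notMem h_not_mem]

theorem IsReducedWord.encard_negPositions_prod {n : ℕ} {L : List P} (h : IsReducedWord n L) :
    (negPositions L.prod).encard = tcount L := by
  induction L using List.reverseRecOn with
  | nil =>
    have h_empty : negPositions 1 = ∅ := Set.eq_empty_of_forall_notMem fun x hx => hx.1.asymm hx.2
    simp [h_empty, tcount]
  | append_singleton L g ih =>
    have hL : IsReducedWord n L := h.of_append
    have h_count : tcount (L ++ [g]) = tcount L + if g = tgen then 1 else 0 := by simp [tcount]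
    rw [List.prod_append, List.prod_singleton, h_count]
    obtain rfl | ⟨k, ⟨hk, -⟩, rfl⟩ := h.1 g (by simp)
    · rw [encard_negPositions_mul_tgen (odd_prod_of_word hL.1) h.prod_apply_one_pos, ih hL]
      simp
    · rw [encard_negPositions_mul_sgen hk, ih hL, if_neg (sgen_ne_tgen hk), add_zero]

end NegativeValues

section CosetRepresentatives

lemma encard_Icc_one (m : ℕ) : (Set.Icc (1 : ℤ) m).encard = m := by
  rw [← Finset.coe_Icc, Set.encard_coe_eq_coe_finsetCard, Int.card_Icc, add_sub_cancel_right,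
    Int.toNat_natCast]

lemma natCast_mem_iff_le_of_encard_eq {S : Set ℤ} (h_pos : S ⊆ Set.Ioi 0)
    (h_pred : ∀ k : ℕ, 1 ≤ k → (k : ℤ) + 1 ∈ S → (k : ℤ) ∈ S) {l : ℕ} (h_card : S.encard = l)
    {m : ℕ} (hm : 1 ≤ m) : (m : ℤ) ∈ S ↔ m ≤ l := by
  have h_lower {j k : ℕ} (hj : 1 ≤ j) (hjk : j ≤ k) : (k : ℤ) ∈ S → (j : ℤ) ∈ S := by
    induction k, hjk using Nat.le_induction with
    | base => exact id
    | succ k hjk ih => exact fun h => ih (h_pred k (hj.trans hjk) (by exact_mod_cast h))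
  constructor
  · intro h_mem
    have h_sub : Set.Icc (1 : ℤ) m ⊆ S := by
      rintro x ⟨hx, hxm⟩
      lift x to ℕ using by omega
      exact h_lower (by omega) (by omega) h_mem
    have h_le := Set.encard_le_encard h_sub
    rw [encard_Icc_one, h_card] at h_le
    exact_mod_cast h_le
  · intro hml
    by_contra h_not_mem
    have h_sub : S ⊆ Set.Icc (1 : ℤ) (m - 1 : ℕ) := by
      intro x hx
      have hx_pos : 0 < x := h_pos hx
      lift x to ℕ using hx_pos.le
      have hxm : ¬ m ≤ x := fun h => h_not_mem (h_lower hm h hx)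
      constructor <;> omega
    have h_le := Set.encard_le_encard h_sub
    rw [encard_Icc_one, h_card, Nat.cast_le] at h_le
    omega

lemma apply_lt_apply_succ_of_mem_Xset {n : ℕ} {L : List P} (hL : ∀ g ∈ L, g ∈ Sset n)
    (ha : L.prod ∈ Xset n) {k : ℕ} (hk : k ∈ Set.Icc 1 (n - 1)) :
    L.prod k < L.prod (k + 1) := by
  have h_min : len n L.prod ≤ len n (L.prod * sgen k) :=
    ha.2 _ (Subgroup.subset_closure ⟨k, hk, rfl⟩)
  by_contra! h_le
  have h_lt : L.prod (k + 1) < L.prod k := h_le.lt_of_ne (L.prod.injective.ne (by omega))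
  have hk_pos : 1 ≤ k := hk.1
  have h_len : len n (L.prod * sgen k) < len n L.prod :=
    sgen_eq_signedSwap k ▸ len_mul_signedSwap_lt hL (by omega) (by omega) (by omega) h_lt
  exact h_min.not_gt h_len

theorem apply_neg_iff_le_of_mem_Xl {n l : ℕ} (hl : 1 ≤ l) {a : P} (ha : a ∈ Xl n l) {m : ℕ}
    (hm : 1 ≤ m) : a m < 0 ↔ m ≤ l := by
  obtain ⟨haX, rfl⟩ := ha
  obtain ⟨L, hL, rfl, h_count⟩ := exists_isReducedWord_of_tlen_pos hl
  have h_card : (negPositions L.prod).encard = tlen n L.prod := by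
    rw [hL.encard_negPositions_prod, h_count]
  have h_pred (k : ℕ) (hk : 1 ≤ k) (h_mem : (k : ℤ) + 1 ∈ negPositions L.prod) :
      (k : ℤ) ∈ negPositions L.prod := by
    obtain hkn | hkn := le_or_gt k (n - 1)
    · exact ⟨by omega, (apply_lt_apply_succ_of_mem_Xset hL.1 haX ⟨hk, hkn⟩).trans h_mem.2⟩
    · have h_fix : L.prod (k + 1) = k + 1 := haX.1.2 _ (by rw [abs_of_pos] <;> omega)
      have := h_mem.2
      omega
  rw [← natCast_mem_iff_le_of_encard_eq (fun x hx => hx.1) h_pred h_card hm]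
  exact (and_iff_right (by omega)).symm

end CosetRepresentatives

theorem conj_ne_sl_general {n l : ℕ} (hl : 1 ≤ l) {a : P} (ha : a ∈ Xl n l) {s : P}
    (hs : Set.MapsTo s (Set.Iio 0) (Set.Iio 0)) : a⁻¹ * s * a ≠ sgen l := by
  intro h
  have h_comm : s * a = a * sgen l := by rw [← h]; group
  have h_neg : a l < 0 := (apply_neg_iff_le_of_mem_Xl hl ha hl).2 le_rfl
  have h_nonneg : ¬ a (l + 1) < 0 := by
    exact_mod_cast mt (apply_neg_iff_le_of_mem_Xl hl ha (Nat.le_add_left 1 l)).1 (by omega)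
  have h_apply : s (a l) = a (l + 1) := by
    simpa [sgen_apply hl] using Equiv.congr_fun h_comm (l : ℤ)
  exact h_nonneg (h_apply ▸ hs h_neg)

/-- For `1 ≤ l ≤ n-1`, `a ∈ X_n^{(l)}` and `s ∈ Σ_n = {s_1, …, s_{n-1}}`,
one has `a⁻¹ s a ≠ s_l`. -/
theorem conj_ne_sl (n l : ℕ) (hl1 : 1 ≤ l) (hl2 : l ≤ n - 1) (a : P) (ha : a ∈ Xl n l)
    (i : ℕ) (hi : i ∈ Set.Icc 1 (n - 1)) :
    a⁻¹ * sgen i * a ≠ sgen l :=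
  conj_ne_sl_general hl1 ha fun _ => (sgen_neg_iff hi.1).2
end
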